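/- There exist a constant c > 0 and an integer d₀ such that for all d ≥ d₀, every d-regular graph G has a spanning subgraph H with girth at least 8 (i.e., H contains no cycle of length at most 7) and minimum degree δ(H) ≥ c·d^{1/3}. -/

import Mathlib

open SimpleGraph

def ContainsCopy {α β : Type*} (F : SimpleGraph α) (H : SimpleGraph β) : Prop :=
  ∃ f : F →g H, Function.Injective f

abbrev GraphFamily := Set (Σ n : ℕ, SimpleGraph (Fin n))

def FamFree {β : Type*} (H : SimpleGraph β) (𝓕 : GraphFamily) : Prop :=
  ∀ F ∈ 𝓕, ¬ ContainsCopy F.2 H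

noncomputable def extremalNum (n : ℕ) (𝓕 : GraphFamily) : ℕ :=
  sSup {k | ∃ H : SimpleGraph (Fin n), FamFree H 𝓕 ∧ k = H.edgeSet.ncard}

def LocallyInjective {α β : Type*} {F : SimpleGraph α} {G : SimpleGraph β}
    (φ : F →g G) : Prop :=
  ∀ v : α, Set.InjOn φ (F.neighborSet v)

def NoLocInjHom {α β : Type*} (F : SimpleGraph α) (G : SimpleGraph β) : Prop :=
  ¬ ∃ φ : F →g G, LocallyInjective φ

def ClosedFamily (𝓕 : GraphFamily) : Prop :=
  ∀ (W : Type) [Fintype W] (G : SimpleGraph W),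
    (∀ F ∈ 𝓕, NoLocInjHom F.2 G) ↔ FamFree G 𝓕

noncomputable def deg {β : Type*} (H : SimpleGraph β) (v : β) : ℕ :=
  (H.neighborSet v).ncard

noncomputable def minDeg {β : Type*} [Fintype β] (H : SimpleGraph β) : ℕ :=
  ⨅ v, deg H v

noncomputable def maxDeg {β : Type*} [Fintype β] (H : SimpleGraph β) : ℕ :=
  ⨆ v, deg H v

def RegularDeg {β : Type*} (G : SimpleGraph β) (d : ℕ) : Prop :=
  ∀ v, deg G v = d

noncomputable def Bad {α γ : Type*} (G : SimpleGraph α) (χ : α → γ) (v : α) : ℕ :=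
  {u | u ∈ G.neighborSet v ∧ ∃ v', v' ∈ G.neighborSet u ∧ v' ≠ v ∧ χ v' = χ v}.ncard

/-! Let `B` be a maximum cut of `G`: a bipartite spanning subgraph with all degrees between `d / 2`
and `d`. If `B` contains a spanning subgraph `H` with a locally injective homomorphism to a
bipartite graph `T` of girth eight, then `H` has no cycle of length at most seven, since neither odd
cycles nor `C₄` and `C₆` map locally injectively to `T`. We take for `T` the affine part of the
symplectic generalized quadrangle over `𝔽_q`, which is `q`-regular with `q ^ 3` vertices on each
side, where `q ^ 3` exceeds `d` by a large constant factor.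

Colour each vertex of `B` by a uniformly random vertex of `T` on its side. By the local lemma, with
positive probability every vertex sees at least `s`, a constant proportion of `q`, neighbours to
which its edge could be kept, whatever colour among at least half of all colours it is given. The
defective vertices, whose own colour is not among those, are then recoloured: an iterative counting
of list colourings, weighted by the room left at each vertex, yields a choice for which conflicts
between defective vertices destroy at most `s / 2` of the edges at each of them. The kept edges form
`H`, whose degrees are at least `s / 2`, of order `q` and hence of order `d ^ (1 / 3)`.
-/

namespace GirthEight

open Finset
open scoped BigOperators

section Probability

variable {Ω : Type*}

open scoped Classical in
/-- The indicator `𝟙[P]` of a proposition, as a real number. -/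
noncomputable def ind (P : Prop) : ℝ := if P then 1 else 0

lemma ind_of {P : Prop} (h : P) : ind P = 1 := if_pos h

lemma ind_of_not {P : Prop} (h : ¬ P) : ind P = 0 := if_neg h

lemma ind_eq_ite (P : Prop) [Decidable P] : ind P = if P then 1 else 0 := by
  by_cases h : P <;> simp [ind, h]

lemma ind_nonneg (P : Prop) : 0 ≤ ind P := by
  by_cases h : P <;> simp [ind, h]

lemma ind_le_one (P : Prop) : ind P ≤ 1 := by
  by_cases h : P <;> simp [ind, h]

lemma ind_mono {P Q : Prop} (h : P → Q) : ind P ≤ ind Q := by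
  by_cases hP : P
  · rw [ind_of hP, ind_of (h hP)]
  · rw [ind_of_not hP]
    exact ind_nonneg Q

lemma ind_and (P Q : Prop) : ind (P ∧ Q) = ind P * ind Q := by
  by_cases hP : P <;> by_cases hQ : Q <;> simp [ind, hP, hQ]

lemma ind_forall_mem {ι : Type*} (s : Finset ι) (P : ι → Prop) :
    ind (∀ i ∈ s, P i) = ∏ i ∈ s, ind (P i) := by
  classical
  simp only [ind_eq_ite, prod_boole]

/-- The probability of the event `P` for a uniformly random element of a finite type. -/
noncomputable def prob [Fintype Ω] (P : Ω → Prop) : ℝ := 𝔼 ω, ind (P ω)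

section Events

variable [Fintype Ω] {P Q R : Ω → Prop}

lemma prob_nonneg (P : Ω → Prop) : 0 ≤ prob P :=
  expect_nonneg fun _ _ ↦ ind_nonneg _

lemma prob_eq_zero (h : ∀ ω, ¬ P ω) : prob P = 0 := by
  simp only [prob, ind_of_not (h _), expect_const_zero]

lemma prob_mono (h : ∀ ω, P ω → Q ω) : prob P ≤ prob Q :=
  expect_le_expect fun ω _ ↦ ind_mono (h ω)

lemma prob_le_add (h : ∀ ω, P ω → Q ω ∨ R ω) : prob P ≤ prob Q + prob R := by
  rw [prob, prob, prob, ← expect_add_distrib]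
  refine expect_le_expect fun ω _ ↦ ?_
  by_cases hP : P ω
  · have hQ := ind_nonneg (Q ω)
    have hR := ind_nonneg (R ω)
    rcases h ω hP with h | h <;> simp only [ind_of hP, ind_of h] <;> linarith
  · rw [ind_of_not hP]
    exact add_nonneg (ind_nonneg _) (ind_nonneg _)

lemma prob_le_sum {ι : Type*} (s : Finset ι) {E : ι → Ω → Prop}
    (h : ∀ ω, P ω → ∃ i ∈ s, E i ω) : prob P ≤ ∑ i ∈ s, prob (E i) := by
  simp only [prob]
  rw [← expect_sum_comm]
  refine expect_le_expect fun ω _ ↦ ?_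
  by_cases hP : P ω
  · obtain ⟨i, hi, hE⟩ := h ω hP
    rw [ind_of hP, ← ind_of hE]
    exact single_le_sum (f := fun i ↦ ind (E i ω)) (fun _ _ ↦ ind_nonneg _) hi
  · rw [ind_of_not hP]
    exact sum_nonneg fun _ _ ↦ ind_nonneg _

lemma prob_eq_add_of_and_not (P Q : Ω → Prop) :
    prob P = prob (fun ω ↦ P ω ∧ ¬ Q ω) + prob (fun ω ↦ Q ω ∧ P ω) := by
  rw [prob, prob, prob, ← expect_add_distrib]
  refine expect_congr rfl fun ω _ ↦ ?_
  by_cases hP : P ω <;> by_cases hQ : Q ω <;> simp [ind, hP, hQ]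

lemma exists_of_prob_pos (h : 0 < prob P) : ∃ ω, P ω := by
  obtain ⟨ω, -, hω⟩ := exists_ne_zero_of_expect_ne_zero h.ne'
  exact ⟨ω, by_contra fun hP ↦ hω (ind_of_not hP)⟩

end Events

section Product

variable {V C : Type*} [Fintype V] [DecidableEq V] [Fintype C]

lemma expect_prod_apply (f : V → C → ℝ) :
    𝔼 φ : V → C, ∏ v, f v (φ v) = ∏ v, 𝔼 c, f v c := by
  simp only [Fintype.expect_eq_sum_div_card, prod_div_distrib, prod_univ_sum,
    Fintype.piFinset_univ, prod_const, card_univ, Fintype.card_fun, Nat.cast_pow]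

-- Exchanging the coordinates in `s` between two independent samples preserves the uniform measure.
lemma expect_mul_of_dependsOn {s t : Finset V} (hst : Disjoint s t) {f g : (V → C) → ℝ}
    (hf : DependsOn f s) (hg : DependsOn g t) :
    𝔼 φ, f φ * g φ = (𝔼 φ, f φ) * 𝔼 φ, g φ := by
  let swap : (V → C) × (V → C) → (V → C) × (V → C) := fun p ↦
    (s.piecewise p.1 p.2, s.piecewise p.2 p.1)
  have swap_involutive : Function.Involutive swap := by
    rintro ⟨a, b⟩
    ext v <;> by_cases hv : v ∈ s <;> simp [swap, hv]
  have hswap (p : (V → C) × (V → C)) : f p.1 * g p.1 = f (swap p).1 * g (swap p).2 := by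
    congr 1
    · exact hf fun v hv ↦ by simp [swap, mem_coe.mp hv]
    · exact hg fun v hv ↦ by simp [swap, disjoint_right.mp hst hv]
  rw [Fintype.expect_mul_expect]
  calc 𝔼 φ, f φ * g φ = 𝔼 φ : V → C, 𝔼 _ψ : V → C, f φ * g φ :=
        expect_congr rfl fun φ _ ↦ (expect_const ⟨φ, mem_univ φ⟩ _).symm
    _ = 𝔼 p : (V → C) × (V → C), f p.1 * g p.1 :=
        (expect_product' univ univ fun φ _ ↦ f φ * g φ).symm
    _ = 𝔼 p : (V → C) × (V → C), f p.1 * g p.2 :=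
        Fintype.expect_equiv swap_involutive.toPerm _ _ hswap
    _ = 𝔼 φ, 𝔼 ψ, f φ * g ψ := expect_product' univ univ fun φ ψ ↦ f φ * g ψ

lemma prob_and_of_dependsOn {s t : Finset V} (hst : Disjoint s t) {P Q : (V → C) → Prop}
    (hP : DependsOn P s) (hQ : DependsOn Q t) :
    prob (fun φ ↦ P φ ∧ Q φ) = prob P * prob Q := by
  simp only [prob, ind_and]
  exact expect_mul_of_dependsOn hst (fun _ _ h ↦ by rw [hP h]) fun _ _ h ↦ by rw [hQ h]

lemma expect_ind_mem (s : Finset C) : 𝔼 c, ind (c ∈ s) = (#s : ℝ) / Fintype.card C := by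
  classical
  simp only [ind_eq_ite, Fintype.expect_eq_sum_div_card, sum_boole, filter_mem_eq_inter, univ_inter]

variable [Nonempty C]

lemma expect_prod_apply_mem (s : Finset V) (f : V → C → ℝ) :
    𝔼 φ : V → C, ∏ v ∈ s, f v (φ v) = ∏ v ∈ s, 𝔼 c, f v c := by
  have h := expect_prod_apply fun v c ↦ if v ∈ s then f v c else 1
  have hexpect (v : V) : 𝔼 c, (if v ∈ s then f v c else 1) = if v ∈ s then 𝔼 c, f v c else 1 := by
    split_ifs
    · rfl
    · exact Fintype.expect_one
  simpa only [hexpect, prod_ite_mem, univ_inter] using h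

lemma prob_apply_mem (v : V) (s : Finset C) :
    prob (fun φ : V → C ↦ φ v ∈ s) = (#s : ℝ) / Fintype.card C := by
  simpa only [prob, prod_singleton, expect_ind_mem] using
    expect_prod_apply_mem {v} fun _ c ↦ ind (c ∈ s)

lemma prob_forall_apply_eq (s : Finset V) (φ₀ : V → C) :
    prob (fun φ : V → C ↦ ∀ v ∈ s, φ v = φ₀ v) = (1 / Fintype.card C : ℝ) ^ #s := by
  simp only [prob, ind_forall_mem]
  rw [expect_prod_apply_mem s fun v c ↦ ind (c = φ₀ v), prod_eq_pow_card]
  intro v _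
  simpa only [mem_singleton, card_singleton, Nat.cast_one] using expect_ind_mem {φ₀ v}

lemma prob_forall_apply_notMem_le (s : Finset V) (t : Finset C) :
    prob (fun φ : V → C ↦ ∀ v ∈ s, φ v ∉ t) ≤
      Real.exp (-((#t : ℝ) * #s / Fintype.card C)) := by
  have hcard : (Fintype.card C : ℝ) ≠ 0 := Nat.cast_ne_zero.mpr Fintype.card_ne_zero
  have hexpect : 𝔼 c, ind (c ∉ t) = 1 - (#t : ℝ) / Fintype.card C := by
    classical
    simp only [← mem_compl, expect_ind_mem, card_compl]
    rw [Nat.cast_sub (card_le_univ t)]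
    field_simp
  simp only [prob, ind_forall_mem]
  rw [expect_prod_apply_mem s fun _ c ↦ ind (c ∉ t), prod_const, hexpect]
  calc (1 - (#t : ℝ) / Fintype.card C) ^ #s
      ≤ Real.exp (-((#t : ℝ) / Fintype.card C)) ^ #s := by
        refine pow_le_pow_left₀ ?_ (Real.one_sub_le_exp_neg _) _
        rw [← hexpect]
        exact expect_nonneg fun _ _ ↦ ind_nonneg _
    _ = Real.exp (-((#t : ℝ) * #s / Fintype.card C)) := by
        rw [← Real.exp_nat_mul]
        ring_nf

end Product

end Probability

section UnionBounds

lemma prob_le_of_forall_fiber {Ω α : Type*} [Fintype Ω] [Finite α] {P : Ω → Prop} (f : Ω → α)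
    {ε : ℝ} (hε : 0 ≤ ε)
    (h : ∀ a, prob (fun ω ↦ f ω = a ∧ P ω) ≤ prob (fun ω ↦ f ω = a) * ε) : prob P ≤ ε := by
  classical
  cases nonempty_fintype α
  have htotal : ∑ a, prob (fun ω ↦ f ω = a) ≤ 1 := by
    simp only [prob]
    rw [← expect_sum_comm]
    simp only [ind_eq_ite, sum_ite_eq, mem_univ, if_true]
    rcases isEmpty_or_nonempty Ω with hΩ | hΩ
    · simp
    · exact Fintype.expect_one.le
  calc prob P ≤ ∑ a, prob (fun ω ↦ f ω = a ∧ P ω) :=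
        prob_le_sum univ fun ω hP ↦ ⟨f ω, mem_univ _, rfl, hP⟩
    _ ≤ ∑ a, prob (fun ω ↦ f ω = a) * ε := sum_le_sum fun a _ ↦ h a
    _ = (∑ a, prob fun ω ↦ f ω = a) * ε := (sum_mul _ _ _).symm
    _ ≤ ε := mul_le_of_le_one_left hε htotal

lemma prob_le_card_filter_exists_le {Ω C X : Type*} [Fintype Ω] (T : Finset C) (A : Finset X)
    (R : Ω → C → X → Prop) [∀ ω, DecidablePred fun l ↦ ∃ x ∈ A, R ω l x] (s : ℕ) {ε : ℝ}
    (h : ∀ Λ ⊆ T, #Λ = s → ∀ g : Λ → X, (∀ l, g l ∈ A) →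
      prob (fun ω ↦ ∀ l : Λ, R ω l (g l)) ≤ ε) :
    prob (fun ω ↦ s ≤ #{l ∈ T | ∃ x ∈ A, R ω l x}) ≤ (#T).choose s * ((#A : ℝ) ^ s * ε) := by
  classical
  calc prob (fun ω ↦ s ≤ #{l ∈ T | ∃ x ∈ A, R ω l x})
      ≤ ∑ Λ ∈ T.powersetCard s, prob (fun ω ↦ ∀ l : Λ, ∃ x ∈ A, R ω l x) := by
        refine prob_le_sum _ fun ω hω ↦ ?_
        obtain ⟨Λ, hΛ, hcard⟩ := exists_subset_card_eq hω
        exact ⟨Λ, mem_powersetCard.mpr ⟨hΛ.trans (filter_subset _ _), hcard⟩,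
          fun l ↦ (mem_filter.mp (hΛ l.2)).2⟩
    _ ≤ ∑ _Λ ∈ T.powersetCard s, (#A : ℝ) ^ s * ε := by
        refine sum_le_sum fun Λ hΛ ↦ ?_
        obtain ⟨hΛT, hΛs⟩ := mem_powersetCard.mp hΛ
        calc prob (fun ω ↦ ∀ l : Λ, ∃ x ∈ A, R ω l x)
            ≤ ∑ g ∈ Fintype.piFinset fun _ : Λ ↦ A, prob (fun ω ↦ ∀ l : Λ, R ω l (g l)) := by
              refine prob_le_sum _ fun ω hω ↦ ?_
              choose g hg hR using hω
              exact ⟨g, Fintype.mem_piFinset.mpr hg, hR⟩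
          _ ≤ ∑ _g ∈ Fintype.piFinset fun _ : Λ ↦ A, ε :=
              sum_le_sum fun g hg ↦ h Λ hΛT hΛs g (Fintype.mem_piFinset.mp hg)
          _ = (#A : ℝ) ^ s * ε := by
              simp [Fintype.card_piFinset, hΛs]
    _ = (#T).choose s * ((#A : ℝ) ^ s * ε) := by
        rw [sum_const, card_powersetCard, nsmul_eq_mul]

variable {V C : Type*} [Fintype V] [DecidableEq V] [Fintype C]

lemma prob_forall_apply_eq_le [Nonempty C] {ι : Type*} [Fintype ι] {x : ι → V} {c : ι → C}
    (hinj : Function.Injective fun i ↦ (x i, c i)) :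
    prob (fun φ : V → C ↦ ∀ i, φ (x i) = c i) ≤ (1 / Fintype.card C : ℝ) ^ Fintype.card ι := by
  by_cases hne : ∃ φ₀ : V → C, ∀ i, φ₀ (x i) = c i
  · obtain ⟨φ₀, hφ₀⟩ := hne
    have hx : Function.Injective x := fun i j hij ↦
      hinj (Prod.ext hij (by simp only [← hφ₀, hij]))
    rw [← card_univ (α := ι), ← card_image_of_injective univ hx, ← prob_forall_apply_eq _ φ₀]
    refine prob_mono fun φ hφ v hv ↦ ?_
    obtain ⟨i, -, rfl⟩ := mem_image.mp hv
    rw [hφ, hφ₀]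
  · rw [prob_eq_zero fun φ hφ ↦ hne ⟨φ, hφ⟩]
    positivity

lemma exp_mul_le_one_add_mul_exp (a : ℝ) {t : ℝ} (h0 : 0 ≤ t) (h1 : t ≤ 1) :
    Real.exp (a * t) ≤ 1 + t * Real.exp a := by
  have h := convexOn_exp.2 (Set.mem_univ 0) (Set.mem_univ a) (sub_nonneg.mpr h1) h0 (by ring)
  simp only [smul_eq_mul, mul_zero, zero_add, Real.exp_zero, mul_one, mul_comm t a] at h
  linarith

lemma prob_le_sum_apply_le_exp [Nonempty C] {h : V → C → ℝ} (h0 : ∀ v c, 0 ≤ h v c)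
    (h1 : ∀ v c, h v c ≤ 1) {lam : ℝ} (hlam : 0 ≤ lam) (a : ℝ) :
    prob (fun φ : V → C ↦ a ≤ ∑ v, h v (φ v)) ≤
      Real.exp (-(lam * a) + Real.exp lam * ∑ v, 𝔼 c, h v c) := by
  have hmoment (v : V) :
      𝔼 c, Real.exp (lam * h v c) ≤ Real.exp (Real.exp lam * 𝔼 c, h v c) := by
    calc 𝔼 c, Real.exp (lam * h v c) ≤ 𝔼 c, (1 + h v c * Real.exp lam) :=
          expect_le_expect fun c _ ↦ exp_mul_le_one_add_mul_exp lam (h0 v c) (h1 v c)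
      _ = Real.exp lam * (𝔼 c, h v c) + 1 := by
          rw [expect_add_distrib, Fintype.expect_one, ← expect_mul]
          ring
      _ ≤ _ := Real.add_one_le_exp _
  calc prob (fun φ : V → C ↦ a ≤ ∑ v, h v (φ v))
      ≤ 𝔼 φ : V → C, Real.exp (-(lam * a)) * ∏ v, Real.exp (lam * h v (φ v)) := by
        refine expect_le_expect fun φ _ ↦ ?_
        rw [← Real.exp_sum, ← Real.exp_add, ← mul_sum]
        by_cases hφ : a ≤ ∑ v, h v (φ v)
        · rw [ind_of hφ]
          exact Real.one_le_exp (by linarith [mul_le_mul_of_nonneg_left hφ hlam])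
        · rw [ind_of_not hφ]
          positivity
    _ = Real.exp (-(lam * a)) * ∏ v, 𝔼 c, Real.exp (lam * h v c) := by
        rw [← mul_expect, expect_prod_apply fun v c ↦ Real.exp (lam * h v c)]
    _ ≤ Real.exp (-(lam * a)) * ∏ v, Real.exp (Real.exp lam * 𝔼 c, h v c) := by
        gcongr with v
        exact hmoment v
    _ = _ := by rw [← Real.exp_sum, ← mul_sum, ← Real.exp_add]

end UnionBounds

section LocalLemma

/-- The probability that none of the events `E i`, `i ∈ s`, occurs. -/
noncomputable def avoidProb {Ω ι : Type*} [Fintype Ω] (E : ι → Ω → Prop) (s : Finset ι) : ℝ :=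
  prob fun ω ↦ ∀ i ∈ s, ¬ E i ω

section General

variable {Ω ι : Type*} [Fintype Ω] {E : ι → Ω → Prop}

lemma avoidProb_nonneg (s : Finset ι) : 0 ≤ avoidProb E s := prob_nonneg _

variable [DecidableEq ι]

lemma avoidProb_eq_add (s : Finset ι) (i : ι) :
    avoidProb E s = avoidProb E (insert i s) + prob (fun ω ↦ E i ω ∧ ∀ j ∈ s, ¬ E j ω) := by
  simp only [avoidProb, forall_mem_insert]
  rw [prob_eq_add_of_and_not _ (E i)]
  simp only [and_comm]

lemma pow_card_mul_avoidProb_le {r : ℝ} (hr : 0 ≤ r) {s t : Finset ι}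
    (hinsert : ∀ u ⊂ s, ∀ i, r * avoidProb E u ≤ avoidProb E (insert i u)) (hts : t ⊆ s) :
    r ^ #(s \ t) * avoidProb E t ≤ avoidProb E s := by
  suffices ∀ u ⊆ s \ t, r ^ #u * avoidProb E t ≤ avoidProb E (t ∪ u) by
    simpa only [union_sdiff_of_subset hts] using this (s \ t) Subset.rfl
  intro u
  induction u using Finset.induction_on with
  | empty => simp
  | insert i u hi ih =>
    intro hu
    obtain ⟨his, hus⟩ := insert_subset_iff.mp hu
    rw [mem_sdiff] at his
    have hssub : t ∪ u ⊂ s :=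
      (ssubset_iff_of_subset (union_subset hts (hus.trans sdiff_subset))).mpr
        ⟨i, his.1, by simp [his.2, hi]⟩
    calc r ^ #(insert i u) * avoidProb E t = r * (r ^ #u * avoidProb E t) := by
          rw [card_insert_of_notMem hi]
          ring
      _ ≤ r * avoidProb E (t ∪ u) := mul_le_mul_of_nonneg_left (ih hus) hr
      _ ≤ avoidProb E (insert i (t ∪ u)) := hinsert _ hssub i
      _ = avoidProb E (t ∪ insert i u) := by rw [union_insert]

end General

lemma half_le_one_sub_two_mul_pow {p : ℝ} {D m : ℕ} (hp : 0 ≤ p) (hp4 : p ≤ 1 / 4)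
    (hpD : 4 * p * D ≤ 1) (hm : m ≤ D) : 1 / 2 ≤ (1 - 2 * p) ^ m :=
  calc (1 : ℝ) / 2 ≤ 1 + D * -(2 * p) := by linarith
    _ ≤ (1 + -(2 * p)) ^ D := one_add_mul_le_pow (by linarith) D
    _ = (1 - 2 * p) ^ D := by ring_nf
    _ ≤ (1 - 2 * p) ^ m := pow_le_pow_of_le_one (by linarith) (by linarith) hm

variable {V C ι : Type*} [Fintype V] [DecidableEq V] [Fintype C] {E : ι → (V → C) → Prop}
  {scope : ι → Finset V} {p : ℝ} {D : ℕ}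

lemma prob_and_avoid_eq_mul (hscope : ∀ i, DependsOn (E i) (scope i)) (i : ι) {s : Finset ι}
    (hs : ∀ j ∈ s, Disjoint (scope i) (scope j)) :
    prob (fun φ ↦ E i φ ∧ ∀ j ∈ s, ¬ E j φ) = prob (E i) * avoidProb E s := by
  refine prob_and_of_dependsOn (t := s.biUnion scope) ((disjoint_biUnion_right _ _ _).mpr hs)
    (hscope i) fun φ ψ h ↦ ?_
  refine propext (forall₂_congr fun j hj ↦ ?_)
  rw [hscope j fun v hv ↦ h v (mem_biUnion.mpr ⟨j, hj, hv⟩)]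

variable [Fintype ι]

lemma one_sub_mul_avoidProb_le [DecidableEq ι] (hscope : ∀ i, DependsOn (E i) (scope i))
    (hp : ∀ i, prob (E i) ≤ p) (hp4 : p ≤ 1 / 4) (hpD : 4 * p * D ≤ 1)
    (hD : ∀ i, #{j | ¬ Disjoint (scope i) (scope j)} ≤ D) (s : Finset ι) (i : ι) :
    (1 - 2 * p) * avoidProb E s ≤ avoidProb E (insert i s) := by
  induction s using Finset.strongInduction generalizing i with
  | H s ih =>
    have hp0 : 0 ≤ p := (prob_nonneg _).trans (hp i)
    set far := {j ∈ s | Disjoint (scope i) (scope j)} with hfar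
    have hnear : #(s \ far) ≤ D := by
      refine (card_le_card fun j hj ↦ ?_).trans (hD i)
      rw [hfar, ← filter_not] at hj
      exact mem_filter.mpr ⟨mem_univ j, (mem_filter.mp hj).2⟩
    have avoid_far_le : avoidProb E far ≤ 2 * avoidProb E s := by
      have hpow := half_le_one_sub_two_mul_pow hp0 hp4 hpD hnear
      have hchain := pow_card_mul_avoidProb_le (by linarith) ih (filter_subset _ s : far ⊆ s)
      linarith [mul_le_mul_of_nonneg_right hpow (avoidProb_nonneg (E := E) far)]
    have hbad : prob (fun φ ↦ E i φ ∧ ∀ j ∈ s, ¬ E j φ) ≤ p * (2 * avoidProb E s) :=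
      calc prob (fun φ ↦ E i φ ∧ ∀ j ∈ s, ¬ E j φ)
          ≤ prob (fun φ ↦ E i φ ∧ ∀ j ∈ far, ¬ E j φ) :=
            prob_mono fun φ h ↦ ⟨h.1, fun j hj ↦ h.2 j (filter_subset _ _ hj)⟩
        _ = prob (E i) * avoidProb E far :=
            prob_and_avoid_eq_mul hscope i fun j hj ↦ (mem_filter.mp hj).2
        _ ≤ p * (2 * avoidProb E s) := mul_le_mul (hp i) avoid_far_le (avoidProb_nonneg _) hp0
    linarith [avoidProb_eq_add (E := E) s i]

theorem lovasz_local_lemma [Nonempty C] (hscope : ∀ i, DependsOn (E i) (scope i))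
    (hp : ∀ i, prob (E i) ≤ p) (hD : ∀ i, #{j | ¬ Disjoint (scope i) (scope j)} ≤ D)
    (hD0 : 1 ≤ D) (hpD : 4 * p * D ≤ 1) : ∃ φ, ∀ i, ¬ E i φ := by
  classical
  have hpos (s : Finset ι) : 0 < avoidProb E s := by
    induction s using Finset.induction_on with
    | empty => simp [avoidProb, prob, ind]
    | insert i s _ ih =>
      have hp0 : 0 ≤ p := (prob_nonneg _).trans (hp i)
      have hp4 : p ≤ 1 / 4 := by
        nlinarith [show (1 : ℝ) ≤ D by exact_mod_cast hD0]
      have hstep := one_sub_mul_avoidProb_le hscope hp hp4 hpD hD s i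
      exact (mul_pos (by linarith) ih).trans_le hstep
  obtain ⟨φ, hφ⟩ := exists_of_prob_pos (hpos univ)
  exact ⟨φ, fun i ↦ hφ i (mem_univ i)⟩

end LocalLemma

section ListColoring

lemma prod_sub_sum_le_prod_max {ι : Type*} [DecidableEq ι] (s : Finset ι) {a b : ι → ℝ}
    (ha : ∀ i ∈ s, 0 ≤ a i) (hb : ∀ i ∈ s, 0 ≤ b i) :
    ∏ i ∈ s, a i - ∑ i ∈ s, b i * ∏ j ∈ s.erase i, a j ≤ ∏ i ∈ s, max 0 (a i - b i) := by
  induction s using Finset.induction_on with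
  | empty => simp
  | insert x s hx ih =>
    rw [forall_mem_insert] at ha hb
    have herase : ∑ i ∈ s, b i * ∏ j ∈ (insert x s).erase i, a j =
        a x * ∑ i ∈ s, b i * ∏ j ∈ s.erase i, a j := by
      rw [mul_sum]
      refine sum_congr rfl fun i hi ↦ ?_
      rw [erase_insert_of_ne (ne_of_mem_of_not_mem hi hx).symm,
        prod_insert fun h ↦ hx (mem_of_mem_erase h)]
      ring
    rw [prod_insert hx, prod_insert hx, sum_insert hx, erase_insert hx, herase]
    have hprod_nonneg : 0 ≤ ∏ i ∈ s, max 0 (a i - b i) :=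
      prod_nonneg fun i _ ↦ le_max_left _ _
    have hprod_le : ∏ i ∈ s, max 0 (a i - b i) ≤ ∏ i ∈ s, a i :=
      prod_le_prod (fun i _ ↦ le_max_left _ _)
        fun i hi ↦ max_le (ha.2 i hi) (by linarith [hb.2 i hi])
    nlinarith [mul_le_mul_of_nonneg_right (le_max_right 0 (a x - b x)) hprod_nonneg,
      mul_le_mul_of_nonneg_left (ih ha.2 hb.2) ha.1, mul_le_mul_of_nonneg_left hprod_le hb.1]

variable {V C : Type*}

/-- The cost `L x z (k x)` paid by the pair `x`, `z` when the colouring `k` gives both the same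
colour. -/
noncomputable def conflict (L : V → V → C → ℝ) (k : V → C) (x z : V) : ℝ :=
  ind (k x = k z) * L x z (k x)

/-- The total conflict of `z` with the other vertices of `s`. -/
noncomputable def load [DecidableEq V] (L : V → V → C → ℝ) (s : Finset V) (k : V → C) (z : V) : ℝ :=
  ∑ x ∈ s.erase z, conflict L k z x

/-- The amount by which the load of `z` stays below `1`, counted as `0` when `k z` is not in the
list of `z`. -/
noncomputable def slack [DecidableEq V] (L : V → V → C → ℝ) (lists : V → Finset C) (s : Finset V)
    (k : V → C) (z : V) : ℝ :=
  ind (k z ∈ lists z) * max 0 (1 - load L s k z)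

/-- A soft count of the list colourings of `s` in which all loads are below `1`: the product of
the slacks is positive exactly for those. -/
noncomputable def weight [DecidableEq V] (L : V → V → C → ℝ) (lists : V → Finset C) (s : Finset V)
    (k : V → C) : ℝ :=
  ∏ z ∈ s, slack L lists s k z

variable {L : V → V → C → ℝ} {lists : V → Finset C} {s t : Finset V} {k : V → C} {x z : V}

lemma conflict_comm (hsymm : ∀ x z c, L x z c = L z x c) (k : V → C) (x z : V) :
    conflict L k x z = conflict L k z x := by
  by_cases h : k x = k z
  · rw [conflict, conflict, h, hsymm]
  · rw [conflict, conflict, ind_of_not h, ind_of_not (Ne.symm h), zero_mul, zero_mul]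

lemma conflict_nonneg (hL : ∀ x z c, 0 ≤ L x z c) : 0 ≤ conflict L k x z :=
  mul_nonneg (ind_nonneg _) (hL _ _ _)

variable [DecidableEq V]

lemma load_nonneg (hL : ∀ x z c, 0 ≤ L x z c) : 0 ≤ load L s k z :=
  sum_nonneg fun _ _ ↦ conflict_nonneg hL

lemma load_mono (hL : ∀ x z c, 0 ≤ L x z c) (hst : s ⊆ t) : load L s k z ≤ load L t k z :=
  sum_le_sum_of_subset_of_nonneg (erase_subset_erase _ hst) fun _ _ _ ↦ conflict_nonneg hL

lemma load_const_mul (a : ℝ) (L : V → V → C → ℝ) (s : Finset V) (k : V → C) (z : V) :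
    load (fun x z c ↦ a * L x z c) s k z = a * load L s k z := by
  simp only [load, conflict, mul_sum, mul_left_comm]

lemma load_insert_self (hx : x ∉ s) : load L (insert x s) k x = ∑ z ∈ s, conflict L k x z := by
  rw [load, erase_insert hx]

lemma load_insert (hx : x ∉ s) (hz : z ∈ s) :
    load L (insert x s) k z = load L s k z + conflict L k z x := by
  rw [load, erase_insert_of_ne (ne_of_mem_of_not_mem hz hx).symm,
    sum_insert fun h ↦ hx (mem_of_mem_erase h), add_comm, load]

lemma slack_nonneg : 0 ≤ slack L lists s k z := mul_nonneg (ind_nonneg _) (le_max_left _ _)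

lemma slack_le_one (hL : ∀ x z c, 0 ≤ L x z c) : slack L lists s k z ≤ 1 :=
  mul_le_one₀ (ind_le_one _) (le_max_left _ _) <|
    max_le zero_le_one (by linarith [load_nonneg (s := s) (k := k) (z := z) hL])

lemma slack_anti (hL : ∀ x z c, 0 ≤ L x z c) (hst : s ⊆ t) :
    slack L lists t k z ≤ slack L lists s k z :=
  mul_le_mul_of_nonneg_left (max_le_max le_rfl (sub_le_sub_left (load_mono hL hst) 1))
    (ind_nonneg _)

lemma slack_pos_iff : 0 < slack L lists s k z ↔ k z ∈ lists z ∧ load L s k z < 1 := by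
  by_cases hmem : k z ∈ lists z <;> simp [slack, ind, hmem]

lemma ind_sub_sum_conflict_le_slack_insert (hL : ∀ x z c, 0 ≤ L x z c) (hx : x ∉ s) :
    ind (k x ∈ lists x) - ∑ z ∈ s, conflict L k x z ≤ slack L lists (insert x s) k x := by
  rw [slack, load_insert_self hx]
  by_cases hmem : k x ∈ lists x
  · rw [ind_of hmem, one_mul]
    exact le_max_right _ _
  · rw [ind_of_not hmem, zero_mul, zero_sub]
    exact neg_nonpos.mpr (sum_nonneg fun _ _ ↦ conflict_nonneg hL)

lemma max_slack_sub_conflict_le_slack_insert (hL : ∀ x z c, 0 ≤ L x z c) (hx : x ∉ s)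
    (hz : z ∈ s) :
    max 0 (slack L lists s k z - conflict L k z x) ≤ slack L lists (insert x s) k z := by
  have hconflict : 0 ≤ conflict L k z x := conflict_nonneg hL
  refine max_le slack_nonneg ?_
  rw [slack, slack, load_insert hx hz]
  by_cases hmem : k z ∈ lists z
  · rw [ind_of hmem, one_mul, one_mul, sub_le_iff_le_add]
    refine max_le (add_nonneg (le_max_left _ _) hconflict) ?_
    linarith [le_max_right 0 (1 - (load L s k z + conflict L k z x))]
  · rw [ind_of_not hmem, zero_mul, zero_mul, zero_sub]
    exact neg_nonpos.mpr hconflict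

lemma weight_nonneg : 0 ≤ weight L lists s k := prod_nonneg fun _ _ ↦ slack_nonneg

lemma dependsOn_weight (s : Finset V) : DependsOn (weight L lists s) s := by
  intro k k' h
  refine prod_congr rfl fun z hz ↦ ?_
  have hload : load L s k z = load L s k' z :=
    sum_congr rfl fun x hx ↦ by
      rw [conflict, conflict, h z hz, h x (mem_of_mem_erase hx)]
  rw [slack, slack, hload, h z hz]

lemma prod_erase_slack_le_weight (hL : ∀ x z c, 0 ≤ L x z c) (z : V) :
    ∏ y ∈ s.erase z, slack L lists s k y ≤ weight L lists (s.erase z) k :=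
  prod_le_prod (fun _ _ ↦ slack_nonneg) fun _ _ ↦ slack_anti hL (erase_subset _ _)

lemma weight_le_weight_erase (hL : ∀ x z c, 0 ≤ L x z c) (hz : z ∈ s) :
    weight L lists s k ≤ weight L lists (s.erase z) k := by
  rw [weight, ← mul_prod_erase s _ hz]
  exact (mul_le_of_le_one_left (prod_nonneg fun _ _ ↦ slack_nonneg) (slack_le_one hL)).trans
    (prod_erase_slack_le_weight hL z)

lemma weight_sub_sum_le_prod_slack_insert (hL : ∀ x z c, 0 ≤ L x z c) (hx : x ∉ s) :
    weight L lists s k - ∑ z ∈ s, conflict L k z x * weight L lists (s.erase z) k ≤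
      ∏ z ∈ s, slack L lists (insert x s) k z :=
  calc weight L lists s k - ∑ z ∈ s, conflict L k z x * weight L lists (s.erase z) k
      ≤ ∏ z ∈ s, slack L lists s k z -
          ∑ z ∈ s, conflict L k z x * ∏ y ∈ s.erase z, slack L lists s k y :=
        sub_le_sub_left (sum_le_sum fun z _ ↦
          mul_le_mul_of_nonneg_left (prod_erase_slack_le_weight hL z) (conflict_nonneg hL)) _
    _ ≤ ∏ z ∈ s, max 0 (slack L lists s k z - conflict L k z x) :=
        prod_sub_sum_le_prod_max s (fun _ _ ↦ slack_nonneg) fun _ _ ↦ conflict_nonneg hL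
    _ ≤ ∏ z ∈ s, slack L lists (insert x s) k z :=
        prod_le_prod (fun _ _ ↦ le_max_left _ _) fun _ hz ↦
          max_slack_sub_conflict_le_slack_insert hL hx hz

lemma weight_insert_ge (hL : ∀ x z c, 0 ≤ L x z c) (hsymm : ∀ x z c, L x z c = L z x c)
    (hx : x ∉ s) :
    ind (k x ∈ lists x) * weight L lists s k -
        2 * ∑ z ∈ s, conflict L k x z * weight L lists (s.erase z) k ≤
      weight L lists (insert x s) k := by
  set lost := ∑ z ∈ s, conflict L k x z * weight L lists (s.erase z) k with hlost
  set rest := ∏ z ∈ s, slack L lists (insert x s) k z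
  have hlost_nonneg : 0 ≤ lost :=
    sum_nonneg fun _ _ ↦ mul_nonneg (conflict_nonneg hL) weight_nonneg
  have hrest_nonneg : 0 ≤ rest := prod_nonneg fun _ _ ↦ slack_nonneg
  have hrest_le : rest ≤ weight L lists s k :=
    prod_le_prod (fun _ _ ↦ slack_nonneg) fun _ _ ↦ slack_anti hL (subset_insert _ _)
  have hrest_ge : weight L lists s k - lost ≤ rest := by
    simpa only [hlost, conflict_comm hsymm k x] using weight_sub_sum_le_prod_slack_insert hL hx
  have hconflicts : (∑ z ∈ s, conflict L k x z) * rest ≤ lost := by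
    rw [sum_mul]
    exact sum_le_sum fun z hz ↦ mul_le_mul_of_nonneg_left
      (hrest_le.trans (weight_le_weight_erase hL hz)) (conflict_nonneg hL)
  have hslack := mul_le_mul_of_nonneg_right
    (ind_sub_sum_conflict_le_slack_insert (lists := lists) (k := k) hL hx) hrest_nonneg
  have hind := mul_le_mul_of_nonneg_left hrest_ge (ind_nonneg (k x ∈ lists x))
  have hweight : weight L lists (insert x s) k = slack L lists (insert x s) k x * rest :=
    prod_insert hx
  linarith [mul_le_mul_of_nonneg_right (ind_le_one (k x ∈ lists x)) hlost_nonneg]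

variable [Fintype C] [Nonempty C]

lemma expect_conflict [Fintype V] (L : V → V → C → ℝ) (hxz : x ≠ z) :
    𝔼 k : V → C, conflict L k x z = (∑ c, L x z c) / (Fintype.card C : ℝ) ^ 2 := by
  classical
  have hconflict (k : V → C) : conflict L k x z =
      ∑ c, L x z c * ind (∀ v ∈ ({x, z} : Finset V), k v = c) := by
    rw [sum_eq_single (k x) (fun c _ hc ↦ ?_) (by simp)]
    · simp only [conflict, forall_mem_insert, mem_singleton, forall_eq, true_and, mul_comm,
        eq_comm (a := k z)]
    · rw [ind_of_not fun h ↦ hc (h x (mem_insert_self _ _)).symm, mul_zero]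
  simp only [hconflict]
  rw [expect_sum_comm, sum_div]
  refine sum_congr rfl fun c _ ↦ ?_
  rw [← mul_expect]
  have hprob := prob_forall_apply_eq {x, z} fun _ : V ↦ c
  rw [prob, card_pair hxz] at hprob
  rw [hprob]
  ring

lemma expect_weight_insert_ge [Fintype V] (hL : ∀ x z c, 0 ≤ L x z c)
    (hsymm : ∀ x z c, L x z c = L z x c) (hx : x ∉ s)
    (hlist : (Fintype.card C : ℝ) ≤ 2 * #(lists x))
    (hcost : 32 * ∑ z ∈ s, ∑ c, L x z c ≤ (Fintype.card C : ℝ) ^ 2)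
    (hratio : ∀ z ∈ s, 𝔼 k, weight L lists (s.erase z) k ≤ 4 * 𝔼 k, weight L lists s k) :
    𝔼 k, weight L lists s k ≤ 4 * 𝔼 k, weight L lists (insert x s) k := by
  have hcard : (0 : ℝ) < Fintype.card C := Nat.cast_pos.mpr Fintype.card_pos
  have hW : 0 ≤ 𝔼 k, weight L lists s k := expect_nonneg fun _ _ ↦ weight_nonneg
  have hkept : (1 / 2) * 𝔼 k, weight L lists s k ≤
      𝔼 k : V → C, ind (k x ∈ lists x) * weight L lists s k := by
    rw [expect_mul_of_dependsOn (s := {x}) (t := s) (by simpa using hx)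
      (fun _ _ h ↦ by rw [h x (by simp)]) (dependsOn_weight s)]
    refine mul_le_mul_of_nonneg_right ?_ hW
    have hmem := prob_apply_mem x (lists x)
    rw [prob] at hmem
    rw [hmem, le_div_iff₀ hcard]
    linarith
  have hlost_term (z : V) (hz : z ∈ s) :
      𝔼 k, conflict L k x z * weight L lists (s.erase z) k ≤
        (∑ c, L x z c) / (Fintype.card C : ℝ) ^ 2 * (4 * 𝔼 k, weight L lists s k) := by
    rw [expect_mul_of_dependsOn (s := {x, z}) (t := s.erase z) (by simp [hx])
      (fun _ _ h ↦ by rw [conflict, conflict, h x (by simp), h z (by simp)]) (dependsOn_weight _),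
      expect_conflict L (ne_of_mem_of_not_mem hz hx).symm]
    exact mul_le_mul_of_nonneg_left (hratio z hz)
      (div_nonneg (sum_nonneg fun _ _ ↦ hL _ _ _) (by positivity))
  have hlost : 𝔼 k, ∑ z ∈ s, conflict L k x z * weight L lists (s.erase z) k ≤
      1 / 32 * (4 * 𝔼 k, weight L lists s k) := by
    rw [expect_sum_comm]
    refine (sum_le_sum hlost_term).trans ?_
    rw [← sum_mul, ← sum_div]
    refine mul_le_mul_of_nonneg_right ?_ (by positivity)
    rw [div_le_iff₀ (by positivity)]
    linarith
  have hinsert := expect_le_expect (s := univ) fun k (_ : k ∈ univ) ↦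
    weight_insert_ge (lists := lists) (k := k) hL hsymm hx
  rw [expect_sub_distrib, ← mul_expect] at hinsert
  linarith

theorem exists_listColoring_load_lt_one [Finite V] {Z : Finset V} (hL : ∀ x z c, 0 ≤ L x z c)
    (hsymm : ∀ x z c, L x z c = L z x c)
    (hlists : ∀ z ∈ Z, (Fintype.card C : ℝ) ≤ 2 * #(lists z))
    (hcost : ∀ x ∈ Z, 32 * ∑ z ∈ Z.erase x, ∑ c, L x z c ≤ (Fintype.card C : ℝ) ^ 2) :
    ∃ k : V → C, ∀ z ∈ Z, k z ∈ lists z ∧ load L Z k z < 1 := by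
  cases nonempty_fintype V
  have hratio (s : Finset V) (hs : s ⊆ Z) : 0 < 𝔼 k, weight L lists s k ∧
      ∀ x ∈ s, 𝔼 k, weight L lists (s.erase x) k ≤ 4 * 𝔼 k, weight L lists s k := by
    induction s using Finset.strongInduction with
    | H s ih =>
      have hstep (x : V) (hx : x ∈ s) : 0 < 𝔼 k, weight L lists (s.erase x) k ∧
          𝔼 k, weight L lists (s.erase x) k ≤ 4 * 𝔼 k, weight L lists s k := by
        obtain ⟨hpos, hratio⟩ := ih _ (erase_ssubset hx) ((erase_subset _ _).trans hs)
        refine ⟨hpos, ?_⟩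
        have hcost_erase : ∑ z ∈ s.erase x, ∑ c, L x z c ≤ ∑ z ∈ Z.erase x, ∑ c, L x z c :=
          sum_le_sum_of_subset_of_nonneg (erase_subset_erase _ hs)
            fun _ _ _ ↦ sum_nonneg fun _ _ ↦ hL _ _ _
        have hinsert := expect_weight_insert_ge hL hsymm (notMem_erase x s) (hlists x (hs hx))
          (by linarith [hcost x (hs hx)]) hratio
        rwa [insert_erase hx] at hinsert
      refine ⟨?_, fun x hx ↦ (hstep x hx).2⟩
      rcases s.eq_empty_or_nonempty with rfl | ⟨x, hx⟩
      · simp [weight]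
      · linarith [hstep x hx]
  obtain ⟨k, -, hk⟩ := exists_ne_zero_of_expect_ne_zero (hratio Z Subset.rfl).1.ne'
  exact ⟨k, fun z hz ↦ slack_pos_iff.mp (slack_nonneg.lt_of_ne' (prod_ne_zero_iff.mp hk z hz))⟩

end ListColoring

lemma color_eq_of_adj_adj {V : Type*} {B : SimpleGraph V} (side : B.Coloring Bool) {u v w : V}
    (huv : B.Adj u v) (huw : B.Adj u w) : side v = side w :=
  Bool.not_inj ((Bool.eq_not.mpr (side.valid huv)).symm.trans (Bool.eq_not.mpr (side.valid huw)))

section Locality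

open scoped Classical

variable {V C : Type*} [Fintype V] (B : SimpleGraph V)

/-- The closed ball of radius `n` around `v` in the graph metric. -/
noncomputable def closedBall (v : V) (n : ℕ) : Finset V := {w | B.edist v w ≤ n}

variable {B} {u v w : V} {n m : ℕ}

lemma mem_closedBall : w ∈ closedBall B v n ↔ B.edist v w ≤ n := by
  simp [closedBall]

lemma mem_closedBall_of_adj (hu : u ∈ closedBall B v n) (huw : B.Adj u w) :
    w ∈ closedBall B v (n + 1) := by
  rw [mem_closedBall] at hu ⊢
  calc B.edist v w ≤ B.edist v u + B.edist u w := B.edist_triangle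
    _ ≤ (n + 1 : ℕ) := by
        rw [edist_eq_one_iff_adj.mpr huw]
        push_cast
        gcongr

lemma closedBall_succ_subset (v : V) (n : ℕ) :
    closedBall B v (n + 1) ⊆
      (closedBall B v n).biUnion fun u ↦ insert u (B.neighborFinset u) := by
  intro w hw
  rw [mem_closedBall, edist_comm] at hw
  obtain ⟨p, hp⟩ := exists_walk_of_edist_ne_top (hw.trans_lt (ENat.natCast_lt_top _)).ne
  rw [← hp, Nat.cast_le] at hw
  rw [mem_biUnion]
  cases p with
  | nil => exact ⟨v, by simp [mem_closedBall], mem_insert_self _ _⟩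
  | cons hadj p =>
    refine ⟨_, ?_, mem_insert_of_mem ((B.mem_neighborFinset _ _).mpr hadj.symm)⟩
    rw [mem_closedBall, edist_comm]
    exact (edist_le p).trans (Nat.cast_le.mpr (by simpa using hw))

lemma card_closedBall_le {d : ℕ} (hd : ∀ v, B.degree v ≤ d) (v : V) (n : ℕ) :
    #(closedBall B v n) ≤ (d + 1) ^ n := by
  induction n with
  | zero => simp [closedBall, filter_eq]
  | succ n ih =>
    calc #(closedBall B v (n + 1))
        ≤ #(closedBall B v n) * (d + 1) :=
          (card_le_card (closedBall_succ_subset v n)).trans <|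
            card_biUnion_le_card_mul _ _ _ fun u _ ↦
              (card_insert_le _ _).trans (Nat.succ_le_succ (hd u))
      _ ≤ (d + 1) ^ n * (d + 1) := Nat.mul_le_mul_right _ ih

lemma mem_closedBall_of_not_disjoint (h : ¬ Disjoint (closedBall B v n) (closedBall B w m)) :
    w ∈ closedBall B v (n + m) := by
  obtain ⟨u, hv, hw⟩ := not_disjoint_iff.mp h
  rw [mem_closedBall] at hv hw ⊢
  calc B.edist v w ≤ B.edist v u + B.edist u w := B.edist_triangle
    _ ≤ (n + m : ℕ) := by
        rw [edist_comm (u := u)]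
        push_cast
        gcongr

variable (B)

/-- The neighbours of `v` that are also adjacent to another vertex of colour `k`; if `v` gets
colour `k`, its edges to these neighbours cannot be kept. -/
noncomputable def blocked (φ : V → C) (v : V) (k : C) : Finset V :=
  {u ∈ B.neighborFinset v | ∃ w ∈ B.neighborFinset u, w ≠ v ∧ φ w = k}

/-- Giving `v` the colour `k` blocks at most half of the edges at `v`. -/
def Admissible (φ : V → C) (v : V) (k : C) : Prop :=
  2 * #(blocked B φ v k) ≤ B.degree v

/-- The vertex `v` has to be recoloured: its own colour is not admissible for it. -/
def Defective (φ : V → C) (v : V) : Prop := ¬ Admissible B φ v (φ v)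

/-- The neighbours `u` of `v` to which the edge can be kept when `v` has colour `k` and `T` is the
set of colours allowed next to it: `u` keeps its colour, which lies in `T` and is unique in the
neighbourhood of `v`, and `k` is unique in the neighbourhood of `u`. -/
noncomputable def usable (T : Finset C) (φ : V → C) (v : V) (k : C) : Finset V :=
  {u ∈ B.neighborFinset v | ¬ Defective B φ u ∧ φ u ∈ T ∧
    (∀ u' ∈ B.neighborFinset v, φ u' = φ u → u' = u) ∧ u ∉ blocked B φ v k}

variable {B}

lemma dependsOn_blocked (v : V) (k : C) :
    DependsOn (fun φ ↦ blocked B φ v k)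
      ((B.neighborFinset v).biUnion (B.neighborFinset ·) : Finset V) := by
  intro φ φ' h
  refine filter_congr fun u hu ↦ exists_congr fun w ↦ and_congr_right fun hw ↦ ?_
  rw [h w (mem_coe.mpr (mem_biUnion.mpr ⟨u, hu, hw⟩))]

lemma neighborFinset_subset_closedBall (hv : u ∈ closedBall B v n) :
    B.neighborFinset u ⊆ closedBall B v (n + 1) :=
  fun w hw ↦ mem_closedBall_of_adj hv ((B.mem_neighborFinset u w).mp hw)

lemma blocked_eq_of_eqOn_closedBall {φ φ' : V → C} (hu : u ∈ closedBall B v n)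
    (h : ∀ w ∈ closedBall B v (n + 2), φ w = φ' w) (k : C) :
    blocked B φ u k = blocked B φ' u k := by
  refine dependsOn_blocked u k fun w hw ↦ h w ?_
  obtain ⟨x, hx, hxw⟩ := mem_biUnion.mp (mem_coe.mp hw)
  exact neighborFinset_subset_closedBall (neighborFinset_subset_closedBall hu hx) hxw

lemma closedBall_mono (hnm : n ≤ m) : closedBall B v n ⊆ closedBall B v m := fun _ hw ↦
  mem_closedBall.mpr ((mem_closedBall.mp hw).trans (Nat.cast_le.mpr hnm))

lemma dependsOn_card_usable_lt (A : C → Finset C) (s : ℕ) (v : V) :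
    DependsOn (fun φ : V → C ↦ ∃ k, Admissible B φ v k ∧ #(usable B (A k) φ v k) < s)
      (closedBall B v 3) := by
  intro φ φ' h
  replace h : ∀ w ∈ closedBall B v 3, φ w = φ' w := h
  have hcenter : v ∈ closedBall B v 0 := by simp [mem_closedBall]
  have hneighbor : ∀ u ∈ B.neighborFinset v, u ∈ closedBall B v 1 := fun u hu ↦
    neighborFinset_subset_closedBall hcenter hu
  have hcolor : ∀ u ∈ B.neighborFinset v, φ u = φ' u := fun u hu ↦
    h u (closedBall_mono (by norm_num) (hneighbor u hu))
  have hblocked : ∀ k, blocked B φ v k = blocked B φ' v k :=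
    blocked_eq_of_eqOn_closedBall hcenter fun w hw ↦ h w (closedBall_mono (by norm_num) hw)
  have hdefective : ∀ u ∈ B.neighborFinset v, (Defective B φ u ↔ Defective B φ' u) := by
    intro u hu
    rw [Defective, Defective, Admissible, Admissible,
      blocked_eq_of_eqOn_closedBall (hneighbor u hu) h, hcolor u hu]
  have husable : ∀ k, usable B (A k) φ v k = usable B (A k) φ' v k := by
    intro k
    refine filter_congr fun u hu ↦ ?_
    have hunique : (∀ u' ∈ B.neighborFinset v, φ u' = φ' u → u' = u) ↔
        ∀ u' ∈ B.neighborFinset v, φ' u' = φ' u → u' = u :=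
      forall₂_congr fun u' hu' ↦ by rw [hcolor u' hu']
    rw [hdefective u hu, hblocked k, hcolor u hu, hunique]
  simp only [Admissible, hblocked, husable]

end Locality

section RandomColoring

open scoped Classical

variable {V C : Type*} [Fintype V] (B : SimpleGraph V)

/-- The colours of `T` used on neighbours of `v` that are not blocked for colour `k`. -/
noncomputable def seenColors (T : Finset C) (φ : V → C) (v : V) (k : C) : Finset C :=
  {l ∈ T | ∃ u ∈ B.neighborFinset v \ blocked B φ v k, φ u = l}

/-- The colours of `T` used on at least two neighbours of `v`. -/
noncomputable def repeatedColors (T : Finset C) (φ : V → C) (v : V) : Finset C :=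
  {l ∈ T | ∃ p ∈ (B.neighborFinset v).offDiag, φ p.1 = l ∧ φ p.2 = l}

/-- The colours of `T` used on a defective neighbour of `v`. -/
noncomputable def defectiveColors (T : Finset C) (φ : V → C) (v : V) : Finset C :=
  {l ∈ T | ∃ u ∈ B.neighborFinset v, φ u = l ∧ Defective B φ u}

variable {B}

lemma card_seenColors_le (T : Finset C) (φ : V → C) (v : V) (k : C) :
    #(seenColors B T φ v k) ≤
      #(usable B T φ v k) + (#(repeatedColors B T φ v) + #(defectiveColors B T φ v)) := by
  have hsubset : seenColors B T φ v k ⊆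
      (usable B T φ v k).image φ ∪ (repeatedColors B T φ v ∪ defectiveColors B T φ v) := by
    intro l hl
    obtain ⟨hT, u, hu, rfl⟩ := mem_filter.mp hl
    obtain ⟨huv, hublocked⟩ := mem_sdiff.mp hu
    by_contra hnot
    simp only [mem_union, not_or] at hnot
    obtain ⟨hunusable, hrepeated, hdefective⟩ := hnot
    refine hunusable (mem_image_of_mem φ (mem_filter.mpr ⟨huv, ?_, hT, ?_, hublocked⟩))
    · exact fun h ↦ hdefective (mem_filter.mpr ⟨hT, u, huv, rfl, h⟩)
    · intro u' hu' heq
      by_contra hne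
      exact hrepeated (mem_filter.mpr ⟨hT, (u', u), mem_offDiag.mpr ⟨hu', huv, hne⟩, heq, rfl⟩)
  calc #(seenColors B T φ v k) ≤ _ := card_le_card hsubset
    _ ≤ #((usable B T φ v k).image φ) + #(repeatedColors B T φ v ∪ defectiveColors B T φ v) :=
      card_union_le _ _
    _ ≤ _ := Nat.add_le_add card_image_le (card_union_le _ _)

section Seen

variable [Fintype C] [Nonempty C] {d : ℕ}

lemma disjoint_secondNeighbors (side : B.Coloring Bool) (v : V) :
    Disjoint ((B.neighborFinset v).biUnion (B.neighborFinset ·)) (B.neighborFinset v) := by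
  rw [Finset.disjoint_left]
  intro w hw hwv
  obtain ⟨u, hu, hw⟩ := mem_biUnion.mp hw
  rw [mem_neighborFinset] at hu hw hwv
  exact side.valid hwv (color_eq_of_adj_adj side hu.symm hw)

lemma prob_admissible_and_unseen_le (side : B.Coloring Bool) {v : V} (hd : d ≤ 2 * B.degree v)
    (k : C) (T : Finset C) :
    prob (fun φ : V → C ↦ Admissible B φ v k ∧
        ∀ u ∈ B.neighborFinset v \ blocked B φ v k, φ u ∉ T) ≤
      Real.exp (-((#T : ℝ) * d / (4 * Fintype.card C))) := by
  refine prob_le_of_forall_fiber (fun φ ↦ blocked B φ v k) (Real.exp_pos _).le fun M ↦ ?_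
  by_cases hM : 2 * #M ≤ B.degree v
  swap
  · rw [prob_eq_zero (fun φ ⟨hblocked, hadm, _⟩ ↦ hM (hblocked ▸ hadm))]
    exact mul_nonneg (prob_nonneg _) (Real.exp_pos _).le
  have hunblocked : d ≤ 4 * #(B.neighborFinset v \ M) := by
    have := le_card_sdiff M (B.neighborFinset v)
    rw [card_neighborFinset_eq_degree] at this
    omega
  calc prob (fun φ : V → C ↦ blocked B φ v k = M ∧ Admissible B φ v k ∧
          ∀ u ∈ B.neighborFinset v \ blocked B φ v k, φ u ∉ T)
      ≤ prob (fun φ : V → C ↦ blocked B φ v k = M ∧ ∀ u ∈ B.neighborFinset v \ M, φ u ∉ T) :=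
        prob_mono fun φ hφ ↦ ⟨hφ.1, hφ.1 ▸ hφ.2.2⟩
    _ = prob (fun φ : V → C ↦ blocked B φ v k = M) *
          prob (fun φ : V → C ↦ ∀ u ∈ B.neighborFinset v \ M, φ u ∉ T) := by
        refine prob_and_of_dependsOn (disjoint_secondNeighbors side v) ?_ ?_
        · exact fun φ φ' h ↦ congrArg (· = M) (dependsOn_blocked v k h)
        · exact fun φ φ' h ↦ propext <| forall₂_congr fun u hu ↦ by
            rw [h u (mem_coe.mpr (mem_sdiff.mp hu).1)]
    _ ≤ _ := by
        refine mul_le_mul_of_nonneg_left ?_ (prob_nonneg _)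
        refine (prob_forall_apply_notMem_le _ _).trans (Real.exp_le_exp.mpr ?_)
        rw [neg_le_neg_iff, mul_comm (4 : ℝ), ← div_div, div_right_comm]
        gcongr
        rw [div_le_iff₀ (by norm_num), mul_assoc]
        gcongr
        exact_mod_cast (mul_comm 4 _) ▸ hunblocked

lemma prob_card_seenColors_lt_le (side : B.Coloring Bool) {v : V} (hd : d ≤ 2 * B.degree v)
    (k : C) {T : Finset C} {r : ℕ} (hr : r ≤ #T) :
    prob (fun φ : V → C ↦ Admissible B φ v k ∧ #(seenColors B T φ v k) < r) ≤
      (#T).choose r * Real.exp (-(((#T : ℝ) - r) * d / (4 * Fintype.card C))) := by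
  calc prob (fun φ : V → C ↦ Admissible B φ v k ∧ #(seenColors B T φ v k) < r)
      ≤ ∑ Λ ∈ T.powersetCard r, prob (fun φ : V → C ↦ Admissible B φ v k ∧
          ∀ u ∈ B.neighborFinset v \ blocked B φ v k, φ u ∉ T \ Λ) := by
        refine prob_le_sum _ fun φ ⟨hadm, hlt⟩ ↦ ?_
        obtain ⟨Λ, hseen, hΛT, hΛr⟩ := exists_subsuperset_card_eq
          (filter_subset _ _ : seenColors B T φ v k ⊆ T) hlt.le hr
        refine ⟨Λ, mem_powersetCard.mpr ⟨hΛT, hΛr⟩, hadm, fun u hu hφu ↦ ?_⟩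
        obtain ⟨hT, hΛ⟩ := mem_sdiff.mp hφu
        exact hΛ (hseen (mem_filter.mpr ⟨hT, u, hu, rfl⟩))
    _ ≤ ∑ _Λ ∈ T.powersetCard r,
          Real.exp (-(((#T : ℝ) - r) * d / (4 * Fintype.card C))) := by
        refine sum_le_sum fun Λ hΛ ↦ ?_
        obtain ⟨hΛT, hΛr⟩ := mem_powersetCard.mp hΛ
        have hcard : (#(T \ Λ) : ℝ) = #T - r := by
          rw [card_sdiff_of_subset hΛT, hΛr, Nat.cast_sub hr]
        exact hcard ▸ prob_admissible_and_unseen_le side hd k (T \ Λ)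
    _ = _ := by rw [sum_const, card_powersetCard, nsmul_eq_mul]

end Seen

lemma prob_le_card_repeatedColors_le [Fintype C] [Nonempty C] {d : ℕ} {v : V} (hd : B.degree v ≤ d)
    (T : Finset C) (s : ℕ) :
    prob (fun φ : V → C ↦ s ≤ #(repeatedColors B T φ v)) ≤
      (#T).choose s * ((d : ℝ) / Fintype.card C) ^ (2 * s) := by
  have hpairs : (#(B.neighborFinset v).offDiag : ℝ) ≤ (d : ℝ) ^ 2 := by
    have hle : #(B.neighborFinset v).offDiag ≤ d ^ 2 := by
      rw [offDiag_card, card_neighborFinset_eq_degree, sq]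
      exact (Nat.sub_le _ _).trans (Nat.mul_le_mul hd hd)
    exact_mod_cast hle
  calc prob (fun φ : V → C ↦ s ≤ #(repeatedColors B T φ v))
      ≤ (#T).choose s * ((#(B.neighborFinset v).offDiag : ℝ) ^ s *
          (1 / Fintype.card C : ℝ) ^ (2 * s)) := by
        refine prob_le_card_filter_exists_le T (B.neighborFinset v).offDiag
          (fun (φ : V → C) l p ↦ φ p.1 = l ∧ φ p.2 = l) s ?_
        intro Λ _ hΛs g hg
        have hinj : Function.Injective fun i : Λ × Bool ↦
            (if i.2 then (g i.1).1 else (g i.1).2, (i.1 : C)) := by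
          rintro ⟨l, b⟩ ⟨l', b'⟩ h
          obtain ⟨hvertex, hcolor⟩ := Prod.ext_iff.mp h
          obtain rfl : l = l' := Subtype.ext hcolor
          have hne := (mem_offDiag.mp (hg l)).2.2
          rcases b with _ | _ <;> rcases b' with _ | _
          · rfl
          · exact absurd hvertex.symm hne
          · exact absurd hvertex hne
          · rfl
        have hle := prob_forall_apply_eq_le hinj
        rw [Fintype.card_prod, Fintype.card_bool, Fintype.card_coe, hΛs, mul_comm] at hle
        refine (prob_mono fun φ hφ ↦ ?_).trans hle
        rintro ⟨l, b⟩
        cases b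
        · exact (hφ l).2
        · exact (hφ l).1
    _ ≤ (#T).choose s * (((d : ℝ) ^ 2) ^ s * (1 / Fintype.card C : ℝ) ^ (2 * s)) := by gcongr
    _ = _ := by rw [← pow_mul, ← mul_pow, mul_one_div]

end RandomColoring

section DefectiveColors

open scoped Classical

variable {V C : Type*} [Fintype V] (B : SimpleGraph V)

/-- The number of common neighbours of `u` and `v`. -/
noncomputable def codegree (u v : V) : ℕ := #(B.neighborFinset u ∩ B.neighborFinset v)

variable {B} {d : ℕ}

lemma codegree_le_degree (u v : V) : codegree B u v ≤ B.degree u :=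
  card_le_card inter_subset_left

lemma sum_codegree_le (hd : ∀ v, B.degree v ≤ d) (u : V) : ∑ y, codegree B u y ≤ d * d := by
  have hcount (y : V) :
      codegree B u y = ∑ w ∈ B.neighborFinset u, if y ∈ B.neighborFinset w then 1 else 0 := by
    rw [← card_filter, codegree, ← filter_mem_eq_inter]
    simp only [mem_neighborFinset, adj_comm]
  calc ∑ y, codegree B u y = ∑ w ∈ B.neighborFinset u, B.degree w := by
        simp only [hcount]
        rw [sum_comm]
        simp only [← card_filter, filter_mem_eq_inter, univ_inter, card_neighborFinset_eq_degree]
    _ ≤ #(B.neighborFinset u) * d := sum_le_card_nsmul _ _ _ fun w _ ↦ hd w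
    _ ≤ d * d := Nat.mul_le_mul_right d (hd u)

lemma card_blocked_le_sum_codegree (φ : V → C) (v : V) (k : C) :
    (#(blocked B φ v k) : ℝ) ≤ ∑ y ∈ univ.erase v, ind (φ y = k) * codegree B v y := by
  have hsubset : blocked B φ v k ⊆
      {y ∈ univ.erase v | φ y = k}.biUnion fun y ↦ B.neighborFinset v ∩ B.neighborFinset y := by
    intro u hu
    obtain ⟨huv, w, hw, hwv, hk⟩ := mem_filter.mp hu
    refine mem_biUnion.mpr ⟨w, by simp [hwv, hk], mem_inter.mpr ⟨huv, ?_⟩⟩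
    rwa [mem_neighborFinset, adj_comm, ← mem_neighborFinset]
  have hcard : #(blocked B φ v k) ≤ ∑ y ∈ univ.erase v with φ y = k, codegree B v y :=
    (card_le_card hsubset).trans card_biUnion_le
  simp only [ind_eq_ite, ite_mul, one_mul, zero_mul, ← sum_filter]
  exact_mod_cast hcard

variable {ι : Type*} [Fintype ι] (x : ι → V) (c : ι → C)

/-- The contribution of giving `y` the colour `k` to the total number of neighbours of the vertices
`x i` that are blocked for the colours `c i`, in units of `d`. The vertices `x i` themselves
contribute nothing, so that the sum over all `y` is independent of the colours of the `x i`. -/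
noncomputable def blockingLoad (B : SimpleGraph V) (d : ℕ) (y : V) (k : C) : ℝ :=
  if y ∈ Set.range x then 0 else ∑ i, ind (k = c i) * ((codegree B (x i) y : ℝ) / d)

variable {x c}

lemma blockingLoad_nonneg (y : V) (k : C) : 0 ≤ blockingLoad x c B d y k := by
  unfold blockingLoad
  split_ifs
  · exact le_rfl
  · exact sum_nonneg fun i _ ↦ mul_nonneg (ind_nonneg _) (by positivity)

lemma blockingLoad_le_one (hd : ∀ v, B.degree v ≤ d) (hc : Function.Injective c) (y : V) (k : C) :
    blockingLoad x c B d y k ≤ 1 := by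
  unfold blockingLoad
  split_ifs
  · exact zero_le_one
  · calc ∑ i, ind (k = c i) * ((codegree B (x i) y : ℝ) / d) ≤ ∑ i, ind (k = c i) := by
          refine sum_le_sum fun i _ ↦ mul_le_of_le_one_right (ind_nonneg _) ?_
          exact div_le_one_of_le₀ (by exact_mod_cast (codegree_le_degree _ y).trans (hd _))
            (Nat.cast_nonneg d)
      _ ≤ 1 := by
          have hcard : #{i | k = c i} ≤ 1 := card_le_one.mpr fun i hi j hj ↦
            hc ((mem_filter.mp hi).2.symm.trans (mem_filter.mp hj).2)
          simp only [ind_eq_ite, sum_boole]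
          exact_mod_cast hcard

lemma sum_expect_blockingLoad_le [Fintype C] (hd : ∀ v, B.degree v ≤ d) :
    ∑ y, 𝔼 k, blockingLoad x c B d y k ≤ (Fintype.card ι : ℝ) * d / Fintype.card C := by
  have hcolor (i : ι) : 𝔼 k, ind (k = c i) = 1 / (Fintype.card C : ℝ) := by
    simpa only [mem_singleton, card_singleton, Nat.cast_one] using expect_ind_mem {c i}
  have hvertex (i : ι) : ∑ y, (codegree B (x i) y : ℝ) / d ≤ d := by
    rw [← sum_div]
    refine div_le_of_le_mul₀ (Nat.cast_nonneg d) (Nat.cast_nonneg d) ?_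
    exact_mod_cast sum_codegree_le hd (x i)
  calc ∑ y, 𝔼 k, blockingLoad x c B d y k
      ≤ ∑ y, 𝔼 k, ∑ i, ind (k = c i) * ((codegree B (x i) y : ℝ) / d) := by
        refine sum_le_sum fun y _ ↦ expect_le_expect fun k _ ↦ ?_
        unfold blockingLoad
        split_ifs
        · exact sum_nonneg fun i _ ↦ mul_nonneg (ind_nonneg _) (by positivity)
        · exact le_rfl
    _ = ∑ i, ∑ y, (codegree B (x i) y : ℝ) / d * (1 / Fintype.card C) := by
        rw [sum_comm]
        refine sum_congr rfl fun y _ ↦ ?_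
        rw [expect_sum_comm]
        refine sum_congr rfl fun i _ ↦ ?_
        rw [← expect_mul, hcolor, mul_comm]
    _ ≤ ∑ _i : ι, (d : ℝ) * (1 / Fintype.card C) := by
        refine sum_le_sum fun i _ ↦ ?_
        rw [← sum_mul]
        exact mul_le_mul_of_nonneg_right (hvertex i) (by positivity)
    _ = _ := by
        rw [sum_const, card_univ, nsmul_eq_mul]
        ring

lemma div_four_le_sum_codegree_of_defective (hc : Function.Injective c)
    (hd : ∀ v, d ≤ 2 * B.degree v) {φ : V → C}
    (hφ : ∀ i, φ (x i) = c i ∧ Defective B φ (x i)) (i : ι) :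
    (d : ℝ) / 4 ≤
      ∑ y, if y ∈ Set.range x then 0 else ind (φ y = c i) * (codegree B (x i) y : ℝ) := by
  have hcard : d ≤ 4 * #(blocked B φ (x i) (c i)) := by
    have hdefective := (hφ i).2
    rw [Defective, Admissible, (hφ i).1] at hdefective
    have := hd (x i)
    omega
  calc (d : ℝ) / 4 ≤ #(blocked B φ (x i) (c i)) := by
        rw [div_le_iff₀' (by norm_num)]
        exact_mod_cast hcard
    _ ≤ ∑ y ∈ univ.erase (x i), ind (φ y = c i) * codegree B (x i) y :=
        card_blocked_le_sum_codegree φ (x i) (c i)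
    _ ≤ ∑ y ∈ univ.erase (x i),
          if y ∈ Set.range x then 0 else ind (φ y = c i) * (codegree B (x i) y : ℝ) := by
        refine sum_le_sum fun y hy ↦ ?_
        split_ifs with hyx
        · obtain ⟨j, rfl⟩ := hyx
          rw [ind_of_not, zero_mul]
          rw [(hφ j).1]
          exact fun hji ↦ ne_of_mem_erase hy (congrArg x (hc hji))
        · exact le_rfl
    _ ≤ _ := by
        refine sum_le_sum_of_subset_of_nonneg (erase_subset _ _) fun y _ _ ↦ ?_
        split_ifs
        · exact le_rfl
        · exact mul_nonneg (ind_nonneg _) (Nat.cast_nonneg _)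

lemma le_sum_blockingLoad_of_defective (hc : Function.Injective c) (hd0 : 0 < d)
    (hd : ∀ v, d ≤ 2 * B.degree v) {φ : V → C}
    (hφ : ∀ i, φ (x i) = c i ∧ Defective B φ (x i)) :
    (Fintype.card ι : ℝ) / 4 ≤ ∑ y, blockingLoad x c B d y (φ y) := by
  calc (Fintype.card ι : ℝ) / 4 = (∑ _i : ι, (d : ℝ) / 4) / d := by
        rw [sum_const, card_univ, nsmul_eq_mul]
        field_simp
    _ ≤ (∑ i, ∑ y,
          if y ∈ Set.range x then 0 else ind (φ y = c i) * (codegree B (x i) y : ℝ)) / d := by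
        gcongr with i
        exact div_four_le_sum_codegree_of_defective hc hd hφ i
    _ = ∑ y, blockingLoad x c B d y (φ y) := by
        rw [sum_comm, sum_div]
        refine sum_congr rfl fun y _ ↦ ?_
        unfold blockingLoad
        split_ifs
        · simp only [sum_const_zero, zero_div]
        · simp only [sum_div, mul_div_assoc]

lemma prob_forall_defective_le [Fintype C] [Nonempty C] (hc : Function.Injective c) (hd0 : 0 < d)
    (hd₁ : ∀ v, B.degree v ≤ d) (hd₂ : ∀ v, d ≤ 2 * B.degree v) {lam : ℝ} (hlam : 0 ≤ lam) :
    prob (fun φ : V → C ↦ ∀ i, φ (x i) = c i ∧ Defective B φ (x i)) ≤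
      (1 / Fintype.card C : ℝ) ^ Fintype.card ι *
        Real.exp (-(lam * Fintype.card ι / 4) +
          Real.exp lam * Fintype.card ι * d / Fintype.card C) := by
  calc prob (fun φ : V → C ↦ ∀ i, φ (x i) = c i ∧ Defective B φ (x i))
      ≤ prob (fun φ : V → C ↦ (∀ i, φ (x i) = c i) ∧
          (Fintype.card ι : ℝ) / 4 ≤ ∑ y, blockingLoad x c B d y (φ y)) :=
        prob_mono fun φ hφ ↦
          ⟨fun i ↦ (hφ i).1, le_sum_blockingLoad_of_defective hc hd0 hd₂ hφ⟩
    _ = prob (fun φ : V → C ↦ ∀ i, φ (x i) = c i) *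
          prob (fun φ : V → C ↦
            (Fintype.card ι : ℝ) / 4 ≤ ∑ y, blockingLoad x c B d y (φ y)) := by
        refine prob_and_of_dependsOn (disjoint_compl_right (a := univ.image x)) ?_ ?_
        · exact fun φ φ' h ↦ propext <| forall_congr' fun i ↦ by
            rw [h (x i) (mem_coe.mpr (mem_image_of_mem x (mem_univ i)))]
        · intro φ φ' h
          refine congrArg _ (sum_congr rfl fun y _ ↦ ?_)
          by_cases hy : y ∈ Set.range x
          · simp only [blockingLoad, if_pos hy]
          · rw [h y (by simpa using hy)]
    _ ≤ _ := by
        refine mul_le_mul (prob_forall_apply_eq_le fun i j hij ↦ hc (Prod.ext_iff.mp hij).2) ?_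
          (prob_nonneg _) (by positivity)
        refine (prob_le_sum_apply_le_exp blockingLoad_nonneg
          (blockingLoad_le_one hd₁ hc) hlam _).trans (Real.exp_le_exp.mpr ?_)
        rw [mul_div_assoc, mul_assoc (Real.exp lam), mul_div_assoc (Real.exp lam)]
        gcongr
        exact sum_expect_blockingLoad_le hd₁

lemma prob_le_card_defectiveColors_le [Fintype C] [Nonempty C] (hd0 : 0 < d)
    (hd₁ : ∀ v, B.degree v ≤ d) (hd₂ : ∀ v, d ≤ 2 * B.degree v) {lam : ℝ} (hlam : 0 ≤ lam)
    (v : V) (T : Finset C) (s : ℕ) :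
    prob (fun φ : V → C ↦ s ≤ #(defectiveColors B T φ v)) ≤
      (#T).choose s * (((d : ℝ) / Fintype.card C) ^ s *
        Real.exp (-(lam * s / 4) + Real.exp lam * s * d / Fintype.card C)) := by
  set tail := Real.exp (-(lam * s / 4) + Real.exp lam * s * d / Fintype.card C) with htail
  calc prob (fun φ : V → C ↦ s ≤ #(defectiveColors B T φ v))
      ≤ (#T).choose s * ((#(B.neighborFinset v) : ℝ) ^ s *
          ((1 / Fintype.card C : ℝ) ^ s * tail)) := by
        refine prob_le_card_filter_exists_le T (B.neighborFinset v)
          (fun (φ : V → C) l u ↦ φ u = l ∧ Defective B φ u) s ?_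
        intro Λ _ hΛs g _
        have hle := prob_forall_defective_le (x := g) (c := ((↑) : Λ → C))
          Subtype.val_injective hd0 hd₁ hd₂ hlam
        rwa [Fintype.card_coe, hΛs, ← htail] at hle
    _ ≤ (#T).choose s * ((d : ℝ) ^ s * ((1 / Fintype.card C : ℝ) ^ s * tail)) := by
        gcongr
        exact hd₁ v
    _ = _ := by rw [← mul_assoc ((d : ℝ) ^ s), ← mul_pow, mul_one_div]

end DefectiveColors

section GoodColoring

open scoped Classical

variable {V C : Type*} [Fintype V] [Fintype C] [Nonempty C] {B : SimpleGraph V}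

theorem exists_coloring_le_card_usable (side : B.Coloring Bool) {d s q : ℕ} (hd0 : 0 < d)
    (hd₁ : ∀ v, B.degree v ≤ d) (hd₂ : ∀ v, d ≤ 2 * B.degree v) {lam : ℝ} (hlam : 0 ≤ lam)
    {A : V → C → Finset C} (hA : ∀ v k, #(A v k) = q) (hsq : 3 * s ≤ q) {p : ℝ}
    (hseen : (q.choose (3 * s) : ℝ) *
      Real.exp (-(((q : ℝ) - (3 * s : ℕ)) * d / (4 * Fintype.card C))) ≤ p)
    (hrepeated : (q.choose s : ℝ) * ((d : ℝ) / Fintype.card C) ^ (2 * s) ≤ p)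
    (hdefective : (q.choose s : ℝ) * (((d : ℝ) / Fintype.card C) ^ s *
      Real.exp (-(lam * s / 4) + Real.exp lam * s * d / Fintype.card C)) ≤ p)
    (hp : 12 * (Fintype.card C : ℝ) * p * ((d : ℝ) + 1) ^ 6 ≤ 1) :
    ∃ φ : V → C, ∀ v k, Admissible B φ v k → s ≤ #(usable B (A v k) φ v k) := by
  have hfail (v : V) :
      prob (fun φ : V → C ↦ ∃ k, Admissible B φ v k ∧ #(usable B (A v k) φ v k) < s) ≤
        Fintype.card C * (p + (p + p)) := by
    rw [← nsmul_eq_mul, ← card_univ, ← sum_const]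
    refine (prob_le_sum univ fun φ ⟨k, hk⟩ ↦ ⟨k, mem_univ k, hk⟩).trans
      (sum_le_sum fun k _ ↦ ?_)
    calc prob (fun φ : V → C ↦ Admissible B φ v k ∧ #(usable B (A v k) φ v k) < s)
        ≤ prob (fun φ : V → C ↦ Admissible B φ v k ∧ #(seenColors B (A v k) φ v k) < 3 * s) +
            prob (fun φ : V → C ↦ s ≤ #(repeatedColors B (A v k) φ v) ∨
              s ≤ #(defectiveColors B (A v k) φ v)) := by
          refine prob_le_add fun φ ⟨hadm, husable⟩ ↦ ?_
          have hseen_le := card_seenColors_le (B := B) (A v k) φ v k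
          refine or_iff_not_imp_right.mpr fun hfew ↦ ⟨hadm, ?_⟩
          rw [not_or, not_le, not_le] at hfew
          linarith [hfew.1, hfew.2, husable]
      _ ≤ p + (p + p) := by
          refine add_le_add ?_ ((prob_le_add fun _ ↦ id).trans (add_le_add ?_ ?_))
          · exact (prob_card_seenColors_lt_le side (hd₂ v) k (hsq.trans_eq (hA v k).symm)).trans
              (by rwa [hA])
          · exact (prob_le_card_repeatedColors_le (hd₁ v) _ s).trans (by rwa [hA])
          · exact (prob_le_card_defectiveColors_le hd0 hd₁ hd₂ hlam v _ s).trans (by rwa [hA])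
  have hdependency (v : V) :
      #{w | ¬ Disjoint (closedBall B v 3) (closedBall B w 3)} ≤ (d + 1) ^ 6 :=
    (card_le_card fun w hw ↦ mem_closedBall_of_not_disjoint (mem_filter.mp hw).2).trans
      (card_closedBall_le hd₁ v 6)
  obtain ⟨φ, hφ⟩ := lovasz_local_lemma (fun v ↦ dependsOn_card_usable_lt (A v) s v) hfail
    hdependency (Nat.one_le_pow _ _ d.succ_pos) (by push_cast; linarith)
  exact ⟨φ, fun v k hadm ↦ not_lt.mp fun hlt ↦ hφ v ⟨k, hadm, hlt⟩⟩

end GoodColoring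

section Recoloring

open scoped Classical

variable {V C : Type*} [Fintype V] [Fintype C] {B : SimpleGraph V} {d : ℕ}

lemma card_not_admissible_le (hd : ∀ v, B.degree v ≤ d) (φ : V → C) {v : V}
    (hv : 0 < B.degree v) : #{k | ¬ Admissible B φ v k} ≤ 2 * d := by
  have hcount : ∑ k, #(blocked B φ v k) ≤ B.degree v * d :=
    calc ∑ k, #(blocked B φ v k)
        = ∑ u ∈ B.neighborFinset v, #{k | ∃ w ∈ B.neighborFinset u, w ≠ v ∧ φ w = k} :=
          sum_card_bipartiteAbove_eq_sum_card_bipartiteBelow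
            fun k u ↦ ∃ w ∈ B.neighborFinset u, w ≠ v ∧ φ w = k
      _ ≤ B.degree v * d := by
          refine sum_le_card_nsmul _ _ _ fun u _ ↦ ?_
          refine (card_le_card (t := (B.neighborFinset u).image φ) fun k hk ↦ ?_).trans
            (card_image_le.trans (hd u))
          obtain ⟨w, hw, -, rfl⟩ := (mem_filter.mp hk).2
          exact mem_image_of_mem φ hw
  refine Nat.le_of_mul_le_mul_right ?_ hv
  calc #{k | ¬ Admissible B φ v k} * B.degree v
      ≤ ∑ k with ¬ Admissible B φ v k, 2 * #(blocked B φ v k) :=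
        card_nsmul_le_sum _ _ _ fun k hk ↦ (not_le.mp (mem_filter.mp hk).2).le
    _ ≤ ∑ k, 2 * #(blocked B φ v k) := sum_le_sum_of_subset (filter_subset _ _)
    _ ≤ 2 * d * B.degree v := by
        rw [← mul_sum, mul_assoc, mul_comm d]
        exact Nat.mul_le_mul_left 2 hcount

/-- The colours that a neighbour of a vertex of colour `k` on side `b` may have, when the coloured
graph is to be mapped to the template `T`. -/
noncomputable def allowed (T : SimpleGraph (Bool × C)) (b : Bool) (k : C) : Finset C :=
  {l | T.Adj (b, k) (!b, l)}

lemma mem_allowed {T : SimpleGraph (Bool × C)} {b : Bool} {k l : C} :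
    l ∈ allowed T b k ↔ T.Adj (b, k) (!b, l) := by
  simp [allowed]

lemma mem_allowed_comm {T : SimpleGraph (Bool × C)} {b : Bool} {k l : C} :
    l ∈ allowed T b k ↔ k ∈ allowed T (!b) l := by
  rw [mem_allowed, mem_allowed, Bool.not_not, T.adj_comm]

variable {T : SimpleGraph (Bool × C)} {side : B.Coloring Bool} {φ : V → C} {q s : ℕ}

variable (T side φ) in
/-- The common neighbours of `v` and `w` that both could use if both had colour `k`. -/
noncomputable def shared (v w : V) (k : C) : Finset V :=
  {u ∈ B.neighborFinset v ∩ B.neighborFinset w | φ u ∈ allowed T (side v) k}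

lemma shared_comm (v w : V) (k : C) : shared T side φ v w k = shared T side φ w v k := by
  rw [shared, shared, inter_comm]
  refine filter_congr fun u hu ↦ ?_
  obtain ⟨hw, hv⟩ := mem_inter.mp hu
  rw [mem_neighborFinset, adj_comm] at hw hv
  rw [color_eq_of_adj_adj side hv hw]

lemma sum_card_shared (hT : ∀ b k, #(allowed T b k) = q) (v w : V) :
    ∑ k, #(shared T side φ v w k) = codegree B v w * q := by
  calc ∑ k, #(shared T side φ v w k)
      = ∑ u ∈ B.neighborFinset v ∩ B.neighborFinset w, #{k | φ u ∈ allowed T (side v) k} :=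
        sum_card_bipartiteAbove_eq_sum_card_bipartiteBelow fun k u ↦ φ u ∈ allowed T (side v) k
    _ = codegree B v w * q := by
        refine sum_const_nat fun u _ ↦ ?_
        rw [← hT (!side v) (φ u)]
        congr 1
        ext k
        rw [mem_filter_univ, mem_allowed_comm]

variable (T side φ) in
/-- After recolouring by `ψ`, the neighbours of a defective vertex `v` at which `v` has to compete
with another defective vertex of its new colour. -/
noncomputable def contested (ψ : V → C) (v : V) : Finset V :=
  {u ∈ B.neighborFinset v | Defective B φ v ∧ φ u ∈ allowed T (side v) (ψ v) ∧
    ∃ w, B.Adj u w ∧ w ≠ v ∧ Defective B φ w ∧ ψ w = ψ v}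

lemma card_contested_le_load (k : V → C) {v : V} :
    (#(contested T side φ k v) : ℝ) ≤
      load (fun v w c ↦ #(shared T side φ v w c)) {w | Defective B φ w} k v := by
  have hsubset : contested T side φ k v ⊆
      {w ∈ erase {w | Defective B φ w} v | k v = k w}.biUnion
        fun w ↦ shared T side φ v w (k v) := by
    intro u hu
    obtain ⟨hvu, -, hcolor, w, huw, hwv, hw, hkw⟩ := mem_filter.mp hu
    refine mem_biUnion.mpr ⟨w, by simp [hwv, hw, hkw], mem_filter.mpr ⟨?_, hcolor⟩⟩
    exact mem_inter.mpr ⟨hvu, (B.mem_neighborFinset w u).mpr huw.symm⟩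
  simp only [load, conflict, ind_eq_ite, ite_mul, one_mul, zero_mul, ← sum_filter]
  exact_mod_cast (card_le_card hsubset).trans card_biUnion_le

lemma contested_congr {ψ k : V → C} (h : ∀ v, Defective B φ v → ψ v = k v) (v : V) :
    contested T side φ ψ v = contested T side φ k v := by
  refine filter_congr fun u _ ↦ and_congr_right fun hv ↦ ?_
  rw [h v hv]
  refine and_congr_right fun _ ↦ exists_congr fun w ↦ ?_
  refine and_congr_right fun _ ↦ and_congr_right fun _ ↦ and_congr_right fun hw ↦ ?_
  rw [h w hw]

lemma card_le_two_mul_card_admissible (hd0 : 0 < d) (hd₁ : ∀ v, B.degree v ≤ d)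
    (hd₂ : ∀ v, d ≤ 2 * B.degree v) (hC : 4 * d ≤ Fintype.card C) (φ : V → C) (v : V) :
    Fintype.card C ≤ 2 * #{k | Admissible B φ v k} := by
  have hnot := card_not_admissible_le hd₁ φ (v := v) (by have := hd₂ v; omega)
  have hsplit := card_filter_add_card_filter_not (s := univ) fun k ↦ Admissible B φ v k
  rw [card_univ] at hsplit
  omega

lemma sum_sum_card_shared_le (hd : ∀ v, B.degree v ≤ d) (hT : ∀ b k, #(allowed T b k) = q)
    (Z : Finset V) (v : V) : ∑ w ∈ Z, ∑ k, #(shared T side φ v w k) ≤ d * d * q := by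
  simp only [sum_card_shared hT, ← sum_mul]
  exact Nat.mul_le_mul_right q ((sum_le_sum_of_subset (subset_univ Z)).trans (sum_codegree_le hd v))

theorem exists_recoloring [Nonempty C] (side : B.Coloring Bool) (hd0 : 0 < d) (hs : 0 < s)
    (hd₁ : ∀ v, B.degree v ≤ d) (hd₂ : ∀ v, d ≤ 2 * B.degree v)
    (hT : ∀ b k, #(allowed T b k) = q) (hC : 4 * d ≤ Fintype.card C)
    (hcost : 64 * (d * d * q) ≤ Fintype.card C ^ 2 * s) (φ : V → C) :
    ∃ ψ : V → C, (∀ v, ¬ Defective B φ v → ψ v = φ v) ∧ (∀ v, Admissible B φ v (ψ v)) ∧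
      ∀ v, 2 * #(contested T side φ ψ v) ≤ s := by
  have hs' : (0 : ℝ) < s := Nat.cast_pos.mpr hs
  have htotal (v : V) : 32 * ∑ w ∈ erase {w | Defective B φ w} v,
      ∑ k, 2 / (s : ℝ) * #(shared T side φ v w k) ≤ (Fintype.card C : ℝ) ^ 2 := by
    simp only [← mul_sum]
    have hle : 64 * ∑ w ∈ erase {w | Defective B φ w} v, ∑ k, #(shared T side φ v w k) ≤
        Fintype.card C ^ 2 * s :=
      (Nat.mul_le_mul_left 64 (sum_sum_card_shared_le hd₁ hT _ v)).trans hcost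
    rw [← mul_assoc, ← mul_div_assoc, div_mul_eq_mul_div, div_le_iff₀ hs']
    norm_num
    exact_mod_cast hle
  obtain ⟨k, hk⟩ := exists_listColoring_load_lt_one (Z := {w | Defective B φ w})
    (L := fun v w c ↦ 2 / (s : ℝ) * #(shared T side φ v w c))
    (lists := fun v ↦ {c | Admissible B φ v c}) (fun _ _ _ ↦ by positivity)
    (fun v w c ↦ by rw [shared_comm])
    (fun v _ ↦ by exact_mod_cast card_le_two_mul_card_admissible hd0 hd₁ hd₂ hC φ v)
    (fun v _ ↦ htotal v)
  refine ⟨fun v ↦ if Defective B φ v then k v else φ v, fun v hv ↦ if_neg hv, fun v ↦ ?_,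
    fun v ↦ ?_⟩
  · dsimp only
    split_ifs with hv
    · exact (mem_filter.mp (hk v (by simpa using hv)).1).2
    · exact not_not.mp hv
  · rw [contested_congr (k := k) fun v hv ↦ if_pos hv]
    by_cases hv : Defective B φ v
    · have hload := (hk v (by simpa using hv)).2
      rw [load_const_mul, div_mul_eq_mul_div, div_lt_one hs'] at hload
      have := card_contested_le_load (T := T) (side := side) (φ := φ) k (v := v)
      have hlt : (2 * #(contested T side φ k v) : ℝ) < s := by linarith
      exact_mod_cast hlt.le
    · simp [contested, hv]

end Recoloring

section KeptGraph

open scoped Classical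

variable {V C : Type*} [Fintype V] [Fintype C] {B : SimpleGraph V}
variable (T : SimpleGraph (Bool × C)) (side : B.Coloring Bool) (φ ψ : V → C)

/-- The neighbours of `v` to which `v` keeps its edge after recolouring by `ψ`. -/
noncomputable def kept (v : V) : Finset V :=
  usable B (allowed T (side v) (ψ v)) φ v (ψ v) \ contested T side φ ψ v

/-- The spanning subgraph of the edges kept by at least one of their endpoints. -/
noncomputable def keptGraph : SimpleGraph V := SimpleGraph.fromRel fun v u ↦ u ∈ kept T side φ ψ v

variable {T side φ ψ} {u v w : V}

lemma adj_of_mem_kept (h : u ∈ kept T side φ ψ v) : B.Adj v u := by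
  rw [← mem_neighborFinset]
  exact (mem_filter.mp (mem_sdiff.mp h).1).1

lemma not_defective_of_mem_kept (h : u ∈ kept T side φ ψ v) : ¬ Defective B φ u :=
  (mem_filter.mp (mem_sdiff.mp h).1).2.1

lemma mem_allowed_of_mem_kept (h : u ∈ kept T side φ ψ v) : φ u ∈ allowed T (side v) (ψ v) :=
  (mem_filter.mp (mem_sdiff.mp h).1).2.2.1

lemma eq_of_mem_kept_of_adj (h : u ∈ kept T side φ ψ v) (hvw : B.Adj v w) (hφ : φ w = φ u) :
    w = u :=
  (mem_filter.mp (mem_sdiff.mp h).1).2.2.2.1 w ((B.mem_neighborFinset v w).mpr hvw) hφ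

lemma eq_of_mem_kept_of_color_eq (h : u ∈ kept T side φ ψ v) (huw : B.Adj u w) (hφ : φ w = ψ v) :
    w = v := by
  by_contra hwv
  obtain ⟨hvu, -, -, -, hblocked⟩ := mem_filter.mp (mem_sdiff.mp h).1
  exact hblocked (mem_filter.mpr ⟨hvu, w, (B.mem_neighborFinset u w).mpr huw, hwv, hφ⟩)

lemma eq_of_mem_kept_of_mem_kept (hψ : ∀ v, ¬ Defective B φ v → ψ v = φ v)
    (hv : u ∈ kept T side φ ψ v) (hw : u ∈ kept T side φ ψ w) (hvw : ψ v = ψ w) : v = w := by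
  by_cases hdv : Defective B φ v
  · by_cases hdw : Defective B φ w
    · by_contra hne
      refine (mem_sdiff.mp hw).2 (mem_filter.mpr ⟨?_, hdw, mem_allowed_of_mem_kept hw, v,
        (adj_of_mem_kept hv).symm, hne, hdv, hvw⟩)
      exact (B.mem_neighborFinset w u).mpr (adj_of_mem_kept hw)
    · exact (eq_of_mem_kept_of_color_eq hv (adj_of_mem_kept hw).symm
        ((hψ w hdw).symm.trans hvw.symm)).symm
  · exact eq_of_mem_kept_of_color_eq hw (adj_of_mem_kept hv).symm ((hψ v hdv).symm.trans hvw)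

lemma keptGraph_adj : (keptGraph T side φ ψ).Adj v u ↔
    u ∈ kept T side φ ψ v ∨ v ∈ kept T side φ ψ u := by
  rw [keptGraph, fromRel_adj, and_iff_right_iff_imp]
  rintro (h | h)
  · exact (adj_of_mem_kept h).ne
  · exact (adj_of_mem_kept h).ne'

lemma keptGraph_le : keptGraph T side φ ψ ≤ B := by
  intro v u h
  rcases keptGraph_adj.mp h with h | h
  · exact adj_of_mem_kept h
  · exact (adj_of_mem_kept h).symm

lemma adj_of_mem_kept_color (hψ : ∀ v, ¬ Defective B φ v → ψ v = φ v)
    (h : u ∈ kept T side φ ψ v) : T.Adj (side v, ψ v) (side u, ψ u) := by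
  rw [hψ u (not_defective_of_mem_kept h),
    Bool.eq_not.mpr (side.valid (adj_of_mem_kept h)).symm, ← mem_allowed]
  exact mem_allowed_of_mem_kept h

variable (T side) in
/-- The map of the kept graph to the template given by the sides and the colours `ψ`. -/
def keptHom (hψ : ∀ v, ¬ Defective B φ v → ψ v = φ v) : keptGraph T side φ ψ →g T where
  toFun v := (side v, ψ v)
  map_rel' h := (keptGraph_adj.mp h).elim (adj_of_mem_kept_color hψ)
    fun h ↦ (adj_of_mem_kept_color hψ h).symm

lemma locallyInjective_keptHom (hψ : ∀ v, ¬ Defective B φ v → ψ v = φ v) :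
    LocallyInjective (keptHom T side hψ) := by
  intro v u hu w hw huw
  replace huw : ψ u = ψ w := congrArg Prod.snd huw
  rcases keptGraph_adj.mp hu with hvu | huv <;> rcases keptGraph_adj.mp hw with hvw | hwv
  · refine eq_of_mem_kept_of_adj hvw (adj_of_mem_kept hvu) ?_
    rw [← hψ u (not_defective_of_mem_kept hvu), ← hψ w (not_defective_of_mem_kept hvw), huw]
  · exact eq_of_mem_kept_of_color_eq hwv (adj_of_mem_kept hvu)
      ((hψ u (not_defective_of_mem_kept hvu)).symm.trans huw)
  · exact (eq_of_mem_kept_of_color_eq huv (adj_of_mem_kept hvw)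
      ((hψ w (not_defective_of_mem_kept hvw)).symm.trans huw.symm)).symm
  · exact eq_of_mem_kept_of_mem_kept hψ huv hwv huw

lemma card_kept_le_deg_keptGraph : #(kept T side φ ψ v) ≤ deg (keptGraph T side φ ψ) v := by
  rw [deg, ← Set.ncard_coe_finset]
  exact Set.ncard_le_ncard (fun u hu ↦ keptGraph_adj.mpr (Or.inl hu)) (Set.toFinite _)

theorem exists_locallyInjective_of_le_card_usable [Nonempty C] (side : B.Coloring Bool)
    {d s q : ℕ} (hd0 : 0 < d) (hs : 0 < s) (hd₁ : ∀ v, B.degree v ≤ d)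
    (hd₂ : ∀ v, d ≤ 2 * B.degree v) (hT : ∀ b k, #(allowed T b k) = q)
    (hC : 4 * d ≤ Fintype.card C) (hcost : 64 * (d * d * q) ≤ Fintype.card C ^ 2 * s)
    (hφ : ∀ v k, Admissible B φ v k → s ≤ #(usable B (allowed T (side v) k) φ v k)) :
    ∃ H ≤ B, (∃ f : H →g T, LocallyInjective f) ∧ ∀ v, s ≤ 2 * deg H v := by
  obtain ⟨ψ, hψ, hadm, hcontested⟩ := exists_recoloring side hd0 hs hd₁ hd₂ hT hC hcost φ
  refine ⟨keptGraph T side φ ψ, keptGraph_le, ⟨_, locallyInjective_keptHom hψ⟩, fun v ↦ ?_⟩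
  have husable := hφ v (ψ v) (hadm v)
  have hkept := le_card_sdiff (contested T side φ ψ v)
    (usable B (allowed T (side v) (ψ v)) φ v (ψ v))
  have hdeg := card_kept_le_deg_keptGraph (T := T) (side := side) (φ := φ) (ψ := ψ) (v := v)
  have := hcontested v
  rw [kept] at hdeg
  omega

end KeptGraph

section Template

variable {F : Type*} [Field F]

/-- Incidence of the point `(a, b, c)` with the line `(x, y, z)` in the affine part of the
symplectic generalized quadrangle over `F`: `b + y = a x` and `c + z = a y`. -/
def Incident (p l : F × F × F) : Prop :=
  p.2.1 + l.2.1 = p.1 * l.1 ∧ p.2.2 + l.2.2 = p.1 * l.2.1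

lemma existsUnique_line (p : F × F × F) (x : F) : ∃! l, Incident p l ∧ l.1 = x := by
  refine ⟨(x, p.1 * x - p.2.1, p.1 * (p.1 * x - p.2.1) - p.2.2), ⟨⟨by ring, by ring⟩, rfl⟩, ?_⟩
  rintro ⟨x, y, z⟩ ⟨⟨hy, hz⟩, rfl⟩
  have hy' : y = p.1 * x - p.2.1 := by linear_combination hy
  exact Prod.ext rfl (Prod.ext hy' (by rw [← hy']; linear_combination hz))

lemma existsUnique_point (l : F × F × F) (a : F) : ∃! p, Incident p l ∧ p.1 = a := by
  refine ⟨(a, a * l.1 - l.2.1, a * l.2.1 - l.2.2), ⟨⟨by ring, by ring⟩, rfl⟩, ?_⟩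
  rintro ⟨a, b, c⟩ ⟨⟨hb, hc⟩, rfl⟩
  exact Prod.ext rfl (Prod.ext (by linear_combination hb) (by linear_combination hc))

lemma Incident.line_eq {p l l' : F × F × F} (h : Incident p l) (h' : Incident p l')
    (hfst : l.1 = l'.1) : l = l' :=
  (existsUnique_line p l'.1).unique ⟨h, hfst⟩ ⟨h', rfl⟩

lemma Incident.point_eq {p p' l : F × F × F} (h : Incident p l) (h' : Incident p' l)
    (hfst : p.1 = p'.1) : p = p' :=
  (existsUnique_point l p'.1).unique ⟨h, hfst⟩ ⟨h', rfl⟩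

lemma point_eq_or_line_eq_of_digon {p p' l l' : F × F × F} (hpl : Incident p l)
    (hpl' : Incident p l') (hp'l : Incident p' l) (hp'l' : Incident p' l') :
    p = p' ∨ l = l' := by
  have hprod : (p.1 - p'.1) * (l.1 - l'.1) = 0 := by
    linear_combination -(hpl.1 - hp'l.1 - hpl'.1 + hp'l'.1)
  exact (mul_eq_zero.mp hprod).imp (fun h ↦ hpl.point_eq hp'l (sub_eq_zero.mp h))
    fun h ↦ hpl.line_eq hpl' (sub_eq_zero.mp h)

lemma point_eq_or_line_eq_of_triangle {p₁ p₂ p₃ l₁₂ l₂₃ l₃₁ : F × F × F}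
    (h₁₂ : Incident p₁ l₁₂) (h₂₁ : Incident p₂ l₁₂) (h₂₃ : Incident p₂ l₂₃)
    (h₃₂ : Incident p₃ l₂₃) (h₃₁ : Incident p₃ l₃₁) (h₁₃ : Incident p₁ l₃₁) :
    p₁ = p₂ ∨ p₃ = p₁ ∨ l₁₂ = l₃₁ := by
  have hprod : (p₁.1 - p₂.1) * ((p₃.1 - p₁.1) * (l₁₂.1 - l₃₁.1)) = 0 := by
    have hfst : (p₁.1 - p₂.1) * (l₁₂.1 - l₃₁.1) + (p₂.1 - p₃.1) * (l₂₃.1 - l₃₁.1) = 0 := by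
      linear_combination -(h₁₂.1 - h₂₁.1 + h₂₃.1 - h₃₂.1 + h₃₁.1 - h₁₃.1)
    have hsnd : (p₁.1 - p₂.1) * (l₁₂.2.1 - l₃₁.2.1) +
        (p₂.1 - p₃.1) * (l₂₃.2.1 - l₃₁.2.1) = 0 := by
      linear_combination -(h₁₂.2 - h₂₁.2 + h₂₃.2 - h₃₂.2 + h₃₁.2 - h₁₃.2)
    have hp₁ : l₁₂.2.1 - l₃₁.2.1 = p₁.1 * (l₁₂.1 - l₃₁.1) := by
      linear_combination h₁₂.1 - h₁₃.1
    have hp₃ : l₂₃.2.1 - l₃₁.2.1 = p₃.1 * (l₂₃.1 - l₃₁.1) := by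
      linear_combination h₃₂.1 - h₃₁.1
    rw [hp₁, hp₃] at hsnd
    linear_combination p₃.1 * hfst - hsnd
  rcases mul_eq_zero.mp hprod with h | h
  · exact Or.inl (h₁₂.point_eq h₂₁ (sub_eq_zero.mp h))
  · exact Or.inr <| (mul_eq_zero.mp h).imp (fun h ↦ h₃₁.point_eq h₁₃ (sub_eq_zero.mp h))
      fun h ↦ h₁₂.line_eq h₁₃ (sub_eq_zero.mp h)

variable (F) in
/-- The incidence graph of the affine part of the generalized quadrangle; the first coordinate
tells points (`true`) from lines (`false`). -/
def quadrangle : SimpleGraph (Bool × F × F × F) :=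
  SimpleGraph.fromRel fun x y ↦ x.1 = true ∧ y.1 = false ∧ Incident x.2 y.2

lemma quadrangle_adj_true_left {p l : F × F × F} {b : Bool} :
    (quadrangle F).Adj (true, p) (b, l) ↔ b = false ∧ Incident p l := by
  cases b <;> simp [quadrangle]

lemma quadrangle_adj_false_left {l p : F × F × F} {b : Bool} :
    (quadrangle F).Adj (false, l) (b, p) ↔ b = true ∧ Incident p l := by
  cases b <;> simp [quadrangle]

lemma card_allowed_quadrangle [Fintype F] (b : Bool) (k : F × F × F) :
    #(allowed (quadrangle F) b k) = Fintype.card F := by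
  have hunique (x : F) : ∃! l, l ∈ allowed (quadrangle F) b k ∧ l.1 = x := by
    cases b
    · simpa only [mem_allowed, quadrangle_adj_false_left, Bool.not_false, true_and]
        using existsUnique_point k x
    · simpa only [mem_allowed, quadrangle_adj_true_left, Bool.not_true, true_and]
        using existsUnique_line k x
  refine card_nbij Prod.fst (fun _ _ ↦ mem_univ _) (fun l hl l' hl' h ↦ ?_) fun x _ ↦ ?_
  · exact (hunique l'.1).unique ⟨hl, h⟩ ⟨hl', rfl⟩
  · exact (hunique x).exists

lemma quadrangle_eq_or_eq_of_square {x₁ x₂ y₁ y₂ : Bool × F × F × F}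
    (h₁₁ : (quadrangle F).Adj x₁ y₁) (h₁₂ : (quadrangle F).Adj x₁ y₂)
    (h₂₁ : (quadrangle F).Adj x₂ y₁) (h₂₂ : (quadrangle F).Adj x₂ y₂) : x₁ = x₂ ∨ y₁ = y₂ := by
  obtain ⟨_ | _, x₁⟩ := x₁ <;> obtain ⟨_ | _, x₂⟩ := x₂ <;>
    obtain ⟨_ | _, y₁⟩ := y₁ <;> obtain ⟨_ | _, y₂⟩ := y₂ <;>
    simp only [quadrangle_adj_true_left, quadrangle_adj_false_left, reduceCtorEq, false_and,
      true_and, Prod.mk.injEq] at *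
  · exact (point_eq_or_line_eq_of_digon h₁₁ h₂₁ h₁₂ h₂₂).symm
  · exact point_eq_or_line_eq_of_digon h₁₁ h₁₂ h₂₁ h₂₂

lemma quadrangle_eq_or_eq_of_hexagon {x₁ x₂ x₃ y₁ y₂ y₃ : Bool × F × F × F}
    (h₁₁ : (quadrangle F).Adj x₁ y₁) (h₂₁ : (quadrangle F).Adj x₂ y₁)
    (h₂₂ : (quadrangle F).Adj x₂ y₂) (h₃₂ : (quadrangle F).Adj x₃ y₂)
    (h₃₃ : (quadrangle F).Adj x₃ y₃) (h₁₃ : (quadrangle F).Adj x₁ y₃) :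
    x₁ = x₂ ∨ x₃ = x₁ ∨ y₁ = y₂ ∨ y₁ = y₃ := by
  obtain ⟨_ | _, x₁⟩ := x₁ <;> obtain ⟨_ | _, x₂⟩ := x₂ <;> obtain ⟨_ | _, x₃⟩ := x₃ <;>
    obtain ⟨_ | _, y₁⟩ := y₁ <;> obtain ⟨_ | _, y₂⟩ := y₂ <;> obtain ⟨_ | _, y₃⟩ := y₃ <;>
    simp only [quadrangle_adj_true_left, quadrangle_adj_false_left, reduceCtorEq, false_and,
      true_and, Prod.mk.injEq] at *
  · have := point_eq_or_line_eq_of_triangle h₂₁ h₂₂ h₃₂ h₃₃ h₁₃ h₁₁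
    tauto
  · have := point_eq_or_line_eq_of_triangle h₁₁ h₂₁ h₂₂ h₃₂ h₃₃ h₁₃
    tauto

variable (F) in
/-- The colouring of the template by points and lines. -/
def quadrangleColoring : (quadrangle F).Coloring Bool :=
  Coloring.mk Prod.fst fun {x y} h ↦ by
    rcases x with ⟨_ | _, x⟩ <;> rcases y with ⟨_ | _, y⟩ <;>
      simp_all [quadrangle_adj_true_left, quadrangle_adj_false_left]

end Template

section Cycles

lemma not_containsCopy_of_noLocInjHom {α β γ : Type*} {G : SimpleGraph α} {H : SimpleGraph β}
    {T : SimpleGraph γ} {f : H →g T} (hf : LocallyInjective f) (hG : NoLocInjHom G T) :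
    ¬ ContainsCopy G H :=
  fun ⟨g, hg⟩ ↦ hG ⟨f.comp g, fun v _ hu _ hw h ↦
    hg (hf (g v) (g.map_adj hu) (g.map_adj hw) h)⟩

lemma noLocInjHom_cycleGraph_of_odd {β : Type*} {T : SimpleGraph β} (side : T.Coloring Bool)
    {j : ℕ} (hj : 2 ≤ j) (hodd : Odd j) : NoLocInjHom (cycleGraph j) T := by
  rintro ⟨f, -⟩
  have coloring : (cycleGraph j).Coloring Bool := side.comp f
  have := coloring.colorable.chromaticNumber_le
  rw [chromaticNumber_cycleGraph_of_odd j hj hodd] at this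
  norm_num at this

variable {F : Type*} [Field F]

lemma noLocInjHom_cycleGraph_four_quadrangle : NoLocInjHom (cycleGraph 4) (quadrangle F) := by
  rintro ⟨f, hf⟩
  rcases quadrangle_eq_or_eq_of_square (x₁ := f 0) (x₂ := f 2) (y₁ := f 1) (y₂ := f 3)
    (f.map_adj (by decide)) (f.map_adj (by decide)) (f.map_adj (by decide))
    (f.map_adj (by decide)) with h | h
  · exact absurd (hf 1 (by decide) (by decide) h) (by decide)
  · exact absurd (hf 0 (by decide) (by decide) h) (by decide)

lemma noLocInjHom_cycleGraph_six_quadrangle : NoLocInjHom (cycleGraph 6) (quadrangle F) := by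
  rintro ⟨f, hf⟩
  rcases quadrangle_eq_or_eq_of_hexagon (x₁ := f 0) (y₁ := f 1) (x₂ := f 2) (y₂ := f 3)
    (x₃ := f 4) (y₃ := f 5) (f.map_adj (by decide)) (f.map_adj (by decide))
    (f.map_adj (by decide)) (f.map_adj (by decide)) (f.map_adj (by decide))
    (f.map_adj (by decide)) with h | h | h | h
  · exact absurd (hf 1 (by decide) (by decide) h) (by decide)
  · exact absurd (hf 5 (by decide) (by decide) h) (by decide)
  · exact absurd (hf 2 (by decide) (by decide) h) (by decide)
  · exact absurd (hf 0 (by decide) (by decide) h) (by decide)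

theorem noLocInjHom_cycleGraph_quadrangle {j : ℕ} (hj₃ : 3 ≤ j) (hj₇ : j ≤ 7) :
    NoLocInjHom (cycleGraph j) (quadrangle F) := by
  rcases Nat.even_or_odd j with heven | hodd
  · obtain rfl | rfl : j = 4 ∨ j = 6 := by
      obtain ⟨m, rfl⟩ := heven
      omega
    · exact noLocInjHom_cycleGraph_four_quadrangle
    · exact noLocInjHom_cycleGraph_six_quadrangle
  · exact noLocInjHom_cycleGraph_of_odd (quadrangleColoring F) (by omega) hodd

end Cycles

section MaxCut

open Matrix

variable {V : Type*} [Fintype V]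

-- Flipping the sign of `v` changes the quadratic form `σᵀ A σ` by `-4 σ v (A σ) v`.
lemma exists_sign_mul_mulVec_nonpos {A : Matrix V V ℤ} (hA : A.IsSymm) (hdiag : ∀ v, A v v = 0) :
    ∃ σ : V → ℤˣ, ∀ v, (σ v : ℤ) * (A *ᵥ fun u ↦ (σ u : ℤ)) v ≤ 0 := by
  classical
  obtain ⟨σ, hmin⟩ := Finite.exists_min fun σ : V → ℤˣ ↦
    (fun u ↦ (σ u : ℤ)) ⬝ᵥ A *ᵥ fun u ↦ (σ u : ℤ)
  refine ⟨σ, fun v ↦ ?_⟩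
  set x : V → ℤ := fun u ↦ (σ u : ℤ) with hx
  have hflip : (fun u ↦ (Function.update σ v (-σ v) u : ℤ)) = x - Pi.single v (2 * x v) := by
    ext u
    rcases eq_or_ne u v with rfl | huv
    · simp only [hx, Function.update_self, Units.val_neg, Pi.sub_apply, Pi.single_eq_same]
      ring
    · simp [hx, huv]
  have hsymm : x ⬝ᵥ A *ᵥ Pi.single v (2 * x v) = 2 * x v * (A *ᵥ x) v := by
    rw [dotProduct_mulVec, ← mulVec_transpose, hA, dotProduct_single, mul_comm]
  have hquad : (Pi.single v (2 * x v) : V → ℤ) ⬝ᵥ A *ᵥ Pi.single v (2 * x v) = 0 := by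
    simp [single_dotProduct, mulVec_single, hdiag]
  have hle := hmin (Function.update σ v (-σ v))
  rw [hflip, mulVec_sub, sub_dotProduct, dotProduct_sub, dotProduct_sub, hsymm, hquad,
    single_dotProduct] at hle
  linarith

open scoped Classical in
lemma exists_bipartite_subgraph_degree_le (G : SimpleGraph V) :
    ∃ B ≤ G, Nonempty (B.Coloring Bool) ∧ ∀ v, G.degree v ≤ 2 * B.degree v := by
  obtain ⟨σ, hσ⟩ := exists_sign_mul_mulVec_nonpos (G.isSymm_adjMatrix (α := ℤ)) (by simp)
  obtain ⟨B, hB⟩ : ∃ B : SimpleGraph V, ∀ u v, B.Adj u v ↔ G.Adj u v ∧ σ u ≠ σ v :=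
    ⟨G ⊓ (⊤ : SimpleGraph ℤˣ).comap σ, by simp⟩
  refine ⟨B, fun u v huv ↦ ((hB u v).mp huv).1,
    ⟨Coloring.mk (fun v ↦ decide (σ v = 1)) fun {u v} huv ↦ ?_⟩, fun v ↦ ?_⟩
  · have hne := ((hB u v).mp huv).2
    rcases Int.units_eq_one_or (σ u) with hu | hu <;>
      rcases Int.units_eq_one_or (σ v) with hv | hv <;> simp [hu, hv] at hne ⊢
  · have hdegree : B.degree v = #{u ∈ G.neighborFinset v | σ v ≠ σ u} := by
      rw [← card_neighborFinset_eq_degree]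
      congr 1
      ext u
      simp [hB]
    have hsign (u : V) : (σ v : ℤ) * σ u = 1 - 2 * if σ v ≠ σ u then 1 else 0 := by
      rcases Int.units_eq_one_or (σ u) with hu | hu <;>
        rcases Int.units_eq_one_or (σ v) with hv | hv <;> simp [hu, hv]
    have hsum := hσ v
    rw [adjMatrix_mulVec_apply, mul_sum] at hsum
    simp only [hsign, sum_sub_distrib, ← mul_sum, sum_boole, ← hdegree, sum_const,
      card_neighborFinset_eq_degree, nsmul_one] at hsum
    zify
    linarith

end MaxCut

section Estimates

open Filter

lemma eventually_mul_pow_le_exp_mul (a : ℝ) (n : ℕ) {b : ℝ} (hb : 0 < b) :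
    ∀ᶠ m : ℕ in atTop, a * (m : ℝ) ^ n ≤ Real.exp (b * m) := by
  have hbound := ((isLittleO_pow_exp_pos_mul_atTop (k := n) hb).const_mul_left a).bound one_pos
  filter_upwards [tendsto_natCast_atTop_atTop.eventually hbound] with m hm
  rw [one_mul, Real.norm_of_nonneg (Real.exp_pos _).le] at hm
  exact (le_abs_self _).trans hm

lemma choose_le_three_mul_pow {n k : ℕ} {M : ℝ} (h : (n : ℝ) ≤ M * k) :
    (n.choose k : ℝ) ≤ (3 * M) ^ k := by
  rcases k.eq_zero_or_pos with rfl | hk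
  · simp
  have hM : 0 ≤ M := nonneg_of_mul_nonneg_left ((Nat.cast_nonneg n).trans h) (by exact_mod_cast hk)
  calc (n.choose k : ℝ) ≤ (n : ℝ) ^ k / k.factorial := Nat.choose_le_pow_div k n
    _ ≤ (M * k) ^ k / k.factorial := by gcongr
    _ = M ^ k * ((k : ℝ) ^ k / k.factorial) := by rw [mul_pow, mul_div_assoc]
    _ ≤ M ^ k * Real.exp k := by
      gcongr
      exact Real.pow_div_factorial_le_exp _ (Nat.cast_nonneg k) k
    _ ≤ M ^ k * 3 ^ k := by
      rw [← Real.exp_one_pow]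
      gcongr
      exact Real.exp_one_lt_three.le
    _ = (3 * M) ^ k := by rw [mul_pow, mul_comm]

lemma pow_le_exp_neg {x : ℝ} (hx₀ : 0 ≤ x) (hx : x ≤ 1 / 3) (s : ℕ) :
    x ^ s ≤ Real.exp (-(s : ℝ)) := by
  calc x ^ s ≤ (1 / 3) ^ s := by gcongr
    _ ≤ (1 / Real.exp 1) ^ s := by
      gcongr
      exact Real.exp_one_lt_three.le
    _ = Real.exp (-(s : ℝ)) := by rw [Real.exp_neg, ← Real.exp_one_pow, one_div, inv_pow]

variable {t d q s : ℕ}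

lemma choose_mul_exp_neg_le_exp_neg (ht₀ : 6 ≤ t)
    (ht : Real.exp 1 * (2 * (t : ℝ) ^ 9) ^ 3 ≤ Real.exp (t / 64))
    (hsq : (t : ℝ) ^ 9 * s ≤ q) (hqs : (q : ℝ) ≤ 2 * t ^ 9 * s) {N : ℝ} (hN₀ : 0 < N)
    (hN : N ≤ 8 * (t ^ 8 * d)) :
    (q.choose (3 * s) : ℝ) * Real.exp (-(((q : ℝ) - (3 * s : ℕ)) * d / (4 * N))) ≤
      Real.exp (-(s : ℝ)) := by
  have hchoose : (q.choose (3 * s) : ℝ) ≤ ((2 * (t : ℝ) ^ 9) ^ 3) ^ s := by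
    rw [← pow_mul]
    refine (choose_le_three_mul_pow (M := 2 * t ^ 9 / 3) ?_).trans_eq ?_
    · push_cast
      linarith
    · ring
  have hsix : 6 * (s : ℝ) ≤ q := by
    have : (6 : ℝ) ≤ t ^ 9 := by exact_mod_cast ht₀.trans (Nat.le_self_pow (by norm_num) t)
    exact le_trans (by gcongr) hsq
  have hexponent : (s : ℝ) * (t / 64) ≤ ((q : ℝ) - (3 * s : ℕ)) * d / (4 * N) := by
    rw [le_div_iff₀ (by positivity)]
    push_cast
    calc (s : ℝ) * (t / 64) * (4 * N) ≤ s * (t / 64) * (4 * (8 * (t ^ 8 * d))) := by gcongr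
      _ = t ^ 9 * s / 2 * d := by ring
      _ ≤ (q - 3 * s) * d := by
        gcongr
        linarith
  have hbase : (2 * (t : ℝ) ^ 9) ^ 3 * Real.exp (-(t / 64)) ≤ Real.exp (-1) := by
    rw [Real.exp_neg, Real.exp_neg, ← div_eq_mul_inv, inv_eq_one_div,
      div_le_div_iff₀ (Real.exp_pos _) (Real.exp_pos _)]
    linarith
  calc _ ≤ ((2 * (t : ℝ) ^ 9) ^ 3) ^ s * Real.exp (s * -(t / 64)) := by
        gcongr
        linarith
    _ = ((2 * (t : ℝ) ^ 9) ^ 3 * Real.exp (-(t / 64))) ^ s := by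
      rw [Real.exp_nat_mul, mul_pow _ (Real.exp _)]
    _ ≤ Real.exp (-1) ^ s := by gcongr
    _ = Real.exp (-(s : ℝ)) := by rw [← Real.exp_nat_mul, mul_neg_one]

lemma choose_mul_div_pow_two_mul_le_exp_neg (ht : 54 ≤ t) (hqs : (q : ℝ) ≤ 2 * t ^ 9 * s)
    {N : ℝ} (hN₀ : 0 < N) (hN : (t : ℝ) ^ 8 * d ≤ N) :
    (q.choose s : ℝ) * ((d : ℝ) / N) ^ (2 * s) ≤ Real.exp (-(s : ℝ)) := by
  have htR : (54 : ℝ) ≤ t := by exact_mod_cast ht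
  have hdN : (d : ℝ) / N ≤ 1 / t ^ 8 := by
    rw [div_le_div_iff₀ hN₀ (by positivity)]
    linarith
  calc _ ≤ (3 * (2 * (t : ℝ) ^ 9)) ^ s * (1 / (t : ℝ) ^ 8) ^ (2 * s) := by
        gcongr
        exact choose_le_three_mul_pow hqs
    _ = (6 / (t : ℝ) ^ 7) ^ s := by
      rw [pow_mul, ← mul_pow]
      congr 1
      field_simp
      ring
    _ ≤ Real.exp (-(s : ℝ)) := by
      refine pow_le_exp_neg (by positivity) ?_ s
      have : (t : ℝ) ≤ t ^ 7 := le_self_pow₀ (by linarith) (by norm_num)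
      rw [div_le_div_iff₀ (by positivity) (by norm_num)]
      linarith

lemma choose_mul_div_pow_mul_exp_le_exp_neg (ht : 54 ≤ t) (hqs : (q : ℝ) ≤ 2 * t ^ 9 * s)
    {N : ℝ} (hN₀ : 0 < N) (hN : (t : ℝ) ^ 8 * d ≤ N) :
    (q.choose s : ℝ) * (((d : ℝ) / N) ^ s * Real.exp (-(8 * Real.log t * s / 4) +
      Real.exp (8 * Real.log t) * s * d / N)) ≤ Real.exp (-(s : ℝ)) := by
  have htR : (54 : ℝ) ≤ t := by exact_mod_cast ht
  have ht₀ : (0 : ℝ) < t := by linarith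
  have hdN : (d : ℝ) / N ≤ 1 / t ^ 8 := by
    rw [div_le_div_iff₀ hN₀ (by positivity)]
    linarith
  have hexplog (n : ℕ) : Real.exp (n * Real.log t) = (t : ℝ) ^ n := by
    rw [Real.exp_nat_mul, Real.exp_log ht₀]
  have hexp : Real.exp (-(8 * Real.log t * s / 4) + Real.exp (8 * Real.log t) * s * d / N) ≤
      (3 / (t : ℝ) ^ 2) ^ s := by
    have hle : Real.exp (8 * Real.log t) * s * d / N ≤ s := by
      rw [show Real.exp (8 * Real.log t) = (t : ℝ) ^ 8 from hexplog 8, div_le_iff₀ hN₀]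
      calc (t : ℝ) ^ 8 * s * d = s * (t ^ 8 * d) := by ring
        _ ≤ s * N := by gcongr
    calc _ ≤ Real.exp (s * (1 - 2 * Real.log t)) := Real.exp_le_exp.mpr (by linarith)
      _ = (Real.exp 1 / (t : ℝ) ^ 2) ^ s := by
        rw [Real.exp_nat_mul, Real.exp_sub,
          show Real.exp (2 * Real.log t) = (t : ℝ) ^ 2 from hexplog 2]
      _ ≤ (3 / (t : ℝ) ^ 2) ^ s := by
        gcongr
        exact Real.exp_one_lt_three.le
  calc _ ≤ (3 * (2 * (t : ℝ) ^ 9)) ^ s * ((1 / (t : ℝ) ^ 8) ^ s * (3 / (t : ℝ) ^ 2) ^ s) := by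
        gcongr
        exact choose_le_three_mul_pow hqs
    _ = (18 / (t : ℝ)) ^ s := by
      rw [← mul_pow, ← mul_pow]
      congr 1
      field_simp
      ring
    _ ≤ Real.exp (-(s : ℝ)) := by
      refine pow_le_exp_neg (by positivity) ?_ s
      rw [div_le_div_iff₀ ht₀ (by norm_num)]
      linarith

lemma mul_exp_neg_mul_pow_le_one (hqs : (q : ℝ) ≤ 2 * t ^ 9 * s) (hd : d + 1 ≤ q ^ 3)
    (hs : 12 * (2 * (t : ℝ) ^ 9) ^ 21 * s ^ 21 ≤ Real.exp s) :
    12 * (q : ℝ) ^ 3 * Real.exp (-(s : ℝ)) * ((d : ℝ) + 1) ^ 6 ≤ 1 := by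
  have hdR : (d : ℝ) + 1 ≤ q ^ 3 := by exact_mod_cast hd
  calc 12 * (q : ℝ) ^ 3 * Real.exp (-(s : ℝ)) * ((d : ℝ) + 1) ^ 6
      ≤ 12 * (q : ℝ) ^ 3 * Real.exp (-(s : ℝ)) * ((q : ℝ) ^ 3) ^ 6 := by gcongr
    _ = 12 * (q : ℝ) ^ 21 * Real.exp (-(s : ℝ)) := by ring
    _ ≤ 12 * (2 * (t : ℝ) ^ 9 * s) ^ 21 * Real.exp (-(s : ℝ)) := by gcongr
    _ = 12 * (2 * (t : ℝ) ^ 9) ^ 21 * s ^ 21 * Real.exp (-(s : ℝ)) := by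
      rw [mul_pow _ (s : ℝ), ← mul_assoc 12]
    _ ≤ Real.exp s * Real.exp (-(s : ℝ)) := by gcongr
    _ = 1 := by rw [← Real.exp_add, add_neg_cancel, Real.exp_zero]

lemma mul_sq_mul_le_sq_mul (ht : 128 ≤ t) (hqs : q ≤ 2 * t ^ 9 * s) {N : ℕ}
    (hN : t ^ 8 * d ≤ N) : 64 * (d * d * q) ≤ N ^ 2 * s := by
  have ht₇ : 128 ≤ t ^ 7 := ht.trans (Nat.le_self_pow (by norm_num) t)
  calc 64 * (d * d * q) ≤ 64 * (d * d * (2 * t ^ 9 * s)) := by gcongr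
    _ = 128 * (t ^ 9 * d ^ 2 * s) := by ring
    _ ≤ t ^ 7 * (t ^ 9 * d ^ 2 * s) := by gcongr
    _ = (t ^ 8 * d) ^ 2 * s := by ring
    _ ≤ N ^ 2 * s := by gcongr

lemma exists_prime_pow_mem_Icc {n x : ℕ} (hn : n ≠ 0) (hx : x ≠ 0) :
    ∃ q : ℕ, q.Prime ∧ q ^ n ∈ Set.Icc x (2 ^ n * x) := by
  have hroot : n.nthRoot x ≠ 0 := by
    rw [← Nat.one_le_iff_ne_zero, Nat.le_nthRoot_iff hn, one_pow]
    exact Nat.one_le_iff_ne_zero.mpr hx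
  obtain ⟨q, hq, hlt, hle⟩ := Nat.exists_prime_lt_and_le_two_mul (n.nthRoot x) hroot
  refine ⟨q, hq, (Nat.lt_pow_nthRoot_add_one hn x).le.trans (Nat.pow_le_pow_left hlt n), ?_⟩
  calc q ^ n ≤ (2 * n.nthRoot x) ^ n := Nat.pow_le_pow_left hle n
    _ = 2 ^ n * n.nthRoot x ^ n := mul_pow ..
    _ ≤ 2 ^ n * x := Nat.mul_le_mul_left _ (Nat.pow_nthRoot_le (Or.inl hn))

end Estimates

section Parameters

open Filter

/-- The range of parameters for which the colouring argument works in degree `d`. Here `q` is the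
order of the field, so that the template has `q ^ 3` colours on each side, which exceeds `d` by a
factor of about `t ^ 8`, and `s` is the number of usable colours asked for at each vertex, a
proportion of about `t ^ (-9)` of the `q` colours allowed there. -/
structure ParameterRange (t d q s : ℕ) : Prop where
  le_t : 128 ≤ t
  t_le_exp : Real.exp 1 * (2 * (t : ℝ) ^ 9) ^ 3 ≤ Real.exp (t / 64)
  s_le_exp : 12 * (2 * (t : ℝ) ^ 9) ^ 21 * s ^ 21 ≤ Real.exp s
  d_pos : 0 < d
  s_pos : 0 < s
  mul_s_le : t ^ 9 * s ≤ q
  le_mul_s : q ≤ 2 * t ^ 9 * s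
  mul_d_le : t ^ 8 * d ≤ q ^ 3
  le_mul_d : q ^ 3 ≤ 8 * (t ^ 8 * d)

lemma exists_prime_parameterRange :
    ∃ t d₀ : ℕ, 0 < t ∧ ∀ d, d₀ ≤ d → ∃ q s, q.Prime ∧ ParameterRange t d q s := by
  obtain ⟨t, ht_exp, ht⟩ := ((eventually_mul_pow_le_exp_mul (Real.exp 1 * 8) 27
    (b := 1 / 64) (by norm_num)).and (eventually_ge_atTop 128)).exists
  obtain ⟨s₀, hs₀⟩ := eventually_atTop.mp ((eventually_mul_pow_le_exp_mul
    (12 * (2 * (t : ℝ) ^ 9) ^ 21) 21 one_pos).and (eventually_ge_atTop 1))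
  have hs₀_pos : 0 < s₀ := (hs₀ s₀ le_rfl).2
  have ht_pos : 0 < t ^ 9 := by positivity
  refine ⟨t, (t ^ 9 * s₀) ^ 3, by omega, fun d hd ↦ ?_⟩
  have hd_pos : 0 < d := lt_of_lt_of_le (by positivity) hd
  obtain ⟨q, hq, hdq, hqd⟩ := exists_prime_pow_mem_Icc (n := 3) (x := t ^ 8 * d) (by norm_num)
    (by positivity)
  have hs₀q : t ^ 9 * s₀ ≤ q :=
    (Nat.pow_le_pow_iff_left (by norm_num)).mp <|
      hd.trans <| (Nat.le_mul_of_pos_left d (by positivity)).trans hdq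
  have hs₀s : s₀ ≤ q / t ^ 9 := (Nat.le_div_iff_mul_le ht_pos).mpr (by rwa [mul_comm])
  have hs_pos : 0 < q / t ^ 9 := hs₀_pos.trans_le hs₀s
  refine ⟨q, q / t ^ 9, hq, ht, ?_, ?_, hd_pos, hs_pos, Nat.mul_div_le _ _, ?_, hdq, hqd⟩
  · convert ht_exp using 1 <;> ring_nf
  · simpa only [one_mul] using (hs₀ _ hs₀s).1
  · calc q ≤ t ^ 9 * (q / t ^ 9 + 1) := (Nat.lt_mul_div_succ q ht_pos).le
      _ ≤ t ^ 9 * (q / t ^ 9 + q / t ^ 9) := by gcongr; exact hs_pos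
      _ = 2 * t ^ 9 * (q / t ^ 9) := by ring

variable {t d q s : ℕ}

lemma ParameterRange.succ_d_le (h : ParameterRange t d q s) : d + 1 ≤ q ^ 3 := by
  have ht : 2 ≤ t ^ 8 := le_trans (by have := h.le_t; omega) (Nat.le_self_pow (by norm_num) t)
  calc d + 1 ≤ 2 * d := by have := h.d_pos; omega
    _ ≤ t ^ 8 * d := by gcongr
    _ ≤ q ^ 3 := h.mul_d_le

lemma ParameterRange.mul_rpow_le (h : ParameterRange t d q s) {m : ℕ} (hm : s ≤ 2 * m) :
    1 / (4 * (t : ℝ) ^ 9) * (d : ℝ) ^ ((1 : ℝ) / 3) ≤ m := by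
  have hdq : (d : ℝ) ≤ (q : ℝ) ^ 3 := by exact_mod_cast (Nat.le_succ d).trans h.succ_d_le
  have hqm : (q : ℝ) ≤ 4 * t ^ 9 * m := by
    have hqs := h.le_mul_s
    have : q ≤ 4 * t ^ 9 * m := by nlinarith [Nat.mul_le_mul_left (2 * t ^ 9) hm]
    exact_mod_cast this
  have ht : 0 < t := by have := h.le_t; omega
  rw [one_div_mul_eq_div, div_le_iff₀' (by positivity)]
  calc (d : ℝ) ^ ((1 : ℝ) / 3) ≤ ((q : ℝ) ^ 3) ^ ((1 : ℝ) / 3) := by gcongr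
    _ = q := by
      rw [one_div]
      exact_mod_cast Real.pow_rpow_inv_natCast (Nat.cast_nonneg q) three_ne_zero
    _ ≤ 4 * t ^ 9 * m := hqm

end Parameters

section Main

variable {V : Type*} {t d q s : ℕ}

lemma deg_eq_degree (G : SimpleGraph V) (v : V) [Fintype (G.neighborSet v)] :
    deg G v = G.degree v := by
  rw [deg, ← Nat.card_coe_set_eq, Nat.card_eq_fintype_card, card_neighborSet_eq_degree]

lemma card_zmod_cube [NeZero q] : Fintype.card (ZMod q × ZMod q × ZMod q) = q ^ 3 := by
  rw [Fintype.card_prod, Fintype.card_prod, ZMod.card]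
  ring

open scoped Classical in
theorem exists_locallyInjective_quadrangle [Fintype V] {B : SimpleGraph V} (side : B.Coloring Bool)
    (hd₁ : ∀ v, B.degree v ≤ d) (hd₂ : ∀ v, d ≤ 2 * B.degree v) [Fact q.Prime]
    (h : ParameterRange t d q s) :
    ∃ H ≤ B, (∃ f : H →g quadrangle (ZMod q), LocallyInjective f) ∧ ∀ v, s ≤ 2 * deg H v := by
  have hcard : (Fintype.card (ZMod q × ZMod q × ZMod q) : ℝ) = (q : ℝ) ^ 3 := by
    exact_mod_cast card_zmod_cube
  have hq₀ : (0 : ℝ) < (q : ℝ) ^ 3 := by exact_mod_cast pow_pos (Fact.out : q.Prime).pos 3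
  have ht := h.le_t
  have hle_self_pow (n : ℕ) (hn : n ≠ 0) : t ≤ t ^ n := Nat.le_self_pow hn t
  have hsq : (t : ℝ) ^ 9 * s ≤ q := by exact_mod_cast h.mul_s_le
  have hqs : (q : ℝ) ≤ 2 * (t : ℝ) ^ 9 * s := by exact_mod_cast h.le_mul_s
  have hdq : (t : ℝ) ^ 8 * d ≤ (q : ℝ) ^ 3 := by exact_mod_cast h.mul_d_le
  have hqd : (q : ℝ) ^ 3 ≤ 8 * (t ^ 8 * d) := by exact_mod_cast h.le_mul_d
  have hallowed (b : Bool) (k : ZMod q × ZMod q × ZMod q) :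
      #(allowed (quadrangle (ZMod q)) b k) = q := by
    rw [card_allowed_quadrangle, ZMod.card]
  obtain ⟨φ, hφ⟩ := exists_coloring_le_card_usable (C := ZMod q × ZMod q × ZMod q) side h.d_pos
    hd₁ hd₂ (lam := 8 * Real.log t) (mul_nonneg (by norm_num) (Real.log_natCast_nonneg t))
    (A := fun v k ↦ allowed (quadrangle (ZMod q)) (side v) k) (fun v k ↦ hallowed _ k)
    (s := s) (p := Real.exp (-s))
    ((Nat.mul_le_mul_right s (by linarith [hle_self_pow 9 (by norm_num)])).trans h.mul_s_le)
    (by rw [hcard]; exact choose_mul_exp_neg_le_exp_neg (by omega) h.t_le_exp hsq hqs hq₀ hqd)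
    (by rw [hcard]; exact choose_mul_div_pow_two_mul_le_exp_neg (by omega) hqs hq₀ hdq)
    (by rw [hcard]; exact choose_mul_div_pow_mul_exp_le_exp_neg (by omega) hqs hq₀ hdq)
    (by rw [hcard]; exact mul_exp_neg_mul_pow_le_one hqs h.succ_d_le h.s_le_exp)
  refine exists_locallyInjective_of_le_card_usable side h.d_pos h.s_pos hd₁ hd₂ hallowed ?_ ?_ hφ
  · rw [card_zmod_cube]
    exact (Nat.mul_le_mul_right d (by linarith [hle_self_pow 8 (by norm_num)])).trans h.mul_d_le
  · rw [card_zmod_cube]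
    exact mul_sq_mul_le_sq_mul ht h.le_mul_s h.mul_d_le

end Main

end GirthEight

theorem statement11 :
    ∃ (c : ℝ) (d₀ : ℕ), 0 < c ∧
      ∀ d : ℕ, d₀ ≤ d →
        ∀ (V : Type) [Fintype V] (G : SimpleGraph V), RegularDeg G d →
          ∃ H : SimpleGraph V, H ≤ G ∧
            (∀ j : ℕ, 3 ≤ j → j ≤ 7 → ¬ ContainsCopy (cycleGraph j) H) ∧
            ∀ v : V, c * (d : ℝ) ^ ((1 : ℝ) / 3) ≤ (deg H v : ℝ) := by
  classical
  obtain ⟨t, d₀, ht, hrange⟩ := GirthEight.exists_prime_parameterRange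
  refine ⟨1 / (4 * (t : ℝ) ^ 9), d₀, by positivity, fun d hd V _ G hG ↦ ?_⟩
  obtain ⟨q, s, hq, hqs⟩ := hrange d hd
  have : Fact q.Prime := ⟨hq⟩
  have hdegree (v : V) : G.degree v = d := (GirthEight.deg_eq_degree G v).symm.trans (hG v)
  obtain ⟨B, hBG, ⟨side⟩, hB⟩ := GirthEight.exists_bipartite_subgraph_degree_le G
  obtain ⟨H, hHB, ⟨f, hf⟩, hH⟩ := GirthEight.exists_locallyInjective_quadrangle side
    (fun v ↦ (degree_le_of_le hBG).trans_eq (hdegree v)) (fun v ↦ hdegree v ▸ hB v) hqs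
  exact ⟨H, hHB.trans hBG,
    fun j hj₃ hj₇ ↦ GirthEight.not_containsCopy_of_noLocInjHom hf
      (GirthEight.noLocInjHom_cycleGraph_quadrangle hj₃ hj₇),
    fun v ↦ hqs.mul_rpow_le (hH v)⟩
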